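/- arXiv:2206.11735 — 2 statements merged into one kernel-verified Lean document; each statement's English description precedes it below -/
import Mathlib

section
/- Assume (A(t), B(t)) is totally controllable on [0,1]. For any symmetric positive definite matrices Σ₀ and Σ₁, there exists a pair (Π, Σ) of matrix functions on [0,1] such that: Π is symmetric and solves the Riccati equation Π' = −A(t)ᵀΠ − ΠA(t) + ΠB(t)B(t)ᵀΠ − Q(t) on [0,1]; Σ solves Σ' = (A(t) − B(t)B(t)ᵀΠ(t))Σ + Σ(A(t) − B(t)B(t)ᵀΠ(t))ᵀ + C(t)D(t)C(t)ᵀ on [0,1]; and Σ(0) = Σ₀, Σ(1) = Σ₁. Moreover, the initial value Π(0), and hence the pair (Π, Σ), is unique. -/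
open Matrix

/-- `IsCtrbMatSeq A B Γ`: `Γ 0 = B` and `Γ k = -A Γ (k-1) + Γ' (k-1)`, i.e. the derivative of
each entry of `Γ k` is the corresponding entry of `Γ (k+1) + A * Γ k`, for `k < n`. -/
def IsCtrbMatSeq {n p : ℕ} (A : ℝ → Matrix (Fin n) (Fin n) ℝ)
    (B : ℝ → Matrix (Fin n) (Fin p) ℝ) (Γ : ℕ → ℝ → Matrix (Fin n) (Fin p) ℝ) : Prop :=
  Γ 0 = B ∧
  ∀ k < n, ∀ (t : ℝ) (i : Fin n) (j : Fin p),
    HasDerivAt (fun τ : ℝ => Γ k τ i j) ((Γ (k + 1) t + A t * Γ k t) i j) t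

/-- The controllability matrix `Θₙ(t) = [Γ₀(t) Γ₁(t) ⋯ Γ_{n−1}(t)]`. -/
def ctrbMat {n p : ℕ} (Γ : ℕ → ℝ → Matrix (Fin n) (Fin p) ℝ) (t : ℝ) :
    Matrix (Fin n) (Fin n × Fin p) ℝ :=
  Matrix.of fun i kj => Γ (kj.1 : ℕ) t i kj.2

/-- Total controllability of `(A(t), B(t))` on `[0,1]`. -/
def TotallyControllable {n p : ℕ} (Γ : ℕ → ℝ → Matrix (Fin n) (Fin p) ℝ) : Prop :=
  ∀ t₀ t₁ : ℝ, 0 ≤ t₀ → t₀ < t₁ → t₁ ≤ 1 →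
    ∃ t ∈ Set.Ioo t₀ t₁, (ctrbMat Γ t).rank = n

/-- `(P, S)` solves the coupled Riccati/Lyapunov equations on `[0,1]` with
boundary conditions `S 0 = Sig0`, `S 1 = Sig1` (derivatives entrywise, within `[0,1]`). -/
def IsCoupledSol {n p q : ℕ} (A Q : ℝ → Matrix (Fin n) (Fin n) ℝ)
    (B : ℝ → Matrix (Fin n) (Fin p) ℝ) (C : ℝ → Matrix (Fin n) (Fin q) ℝ)
    (D : ℝ → Matrix (Fin q) (Fin q) ℝ) (Sig0 Sig1 : Matrix (Fin n) (Fin n) ℝ)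
    (P S : ℝ → Matrix (Fin n) (Fin n) ℝ) : Prop :=
  (∀ t ∈ Set.Icc (0:ℝ) 1, (P t)ᵀ = P t) ∧
  (∀ t ∈ Set.Icc (0:ℝ) 1, ∀ (i j : Fin n),
    HasDerivWithinAt (fun τ : ℝ => P τ i j)
      ((-(A t)ᵀ * P t - P t * A t + P t * (B t * (B t)ᵀ) * P t - Q t) i j)
      (Set.Icc (0:ℝ) 1) t) ∧
  (∀ t ∈ Set.Icc (0:ℝ) 1, ∀ (i j : Fin n),
    HasDerivWithinAt (fun τ : ℝ => S τ i j)
      (((A t - B t * (B t)ᵀ * P t) * S t + S t * (A t - B t * (B t)ᵀ * P t)ᵀ +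
        C t * D t * (C t)ᵀ) i j)
      (Set.Icc (0:ℝ) 1) t) ∧
  S 0 = Sig0 ∧ S 1 = Sig1

/-!
Let `Φ` be a fundamental matrix of `x' = A x` and `W = Φ⁻¹`. In the moving frame `P ↦ Φᵀ P Φ`,
`S ↦ W S Wᵀ` the drift disappears, and the equations become `P' = P M P - Q`,
`S' = -M P S - S P M + N` with positive semidefinite `M = W B Bᵀ Wᵀ`, `Q` and `N`. Since
`(W Γₖ)' = W Γₖ₊₁`, controllability at times accumulating at `1` says that no nonzero constant
vector is annihilated by `M` throughout a final interval `[τ, 1]`.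

Let `dualCost P = tr (P(1) Σ₁) - tr (P(0) Σ₀) - ∫ tr (P N)`. For two solutions `(P₁, S₁)`,
`(P₂, S₂)` of the boundary value problem the difference of the dual costs is both
`∫ tr ((P₂ - P₁) M (P₂ - P₁) S₁)` and `-∫ tr ((P₂ - P₁) M (P₂ - P₁) S₂)`. Both `Sᵢ` stay positive
definite, so `M (P₂ - P₁) = 0` throughout. Then `P₂ - P₁` is constant, hence zero.

A solution is found by minimising `dualCost` over the Riccati solutions `P`. If `S` is the Lyapunov
solution of `P` ending at `S(1) = Σ₁`, varying the initial value of `P` changes `dualCost` to first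
order by `tr (δP(0) (S(0) - Σ₀))`, so a minimiser satisfies `S(0) = Σ₀`. Sublevel sets of `dualCost`
are compact: steering the covariance with open-loop controls, possible between all pairs of
covariances near `(Σ₀, Σ₁)` because the Gramian `∫ M` is invertible, bounds `dualCost` from below by
arbitrary linear functionals of `(P(0), P(1))`, and therefore bounds all of `P`. Truncating the
Riccati field outside a large ball gives a globally defined flow depending continuously on the
initial value, and the a priori bound keeps the minimiser inside that ball.
-/

section ODE

open Set
open scoped NNReal

variable {E : Type*} [NormedAddCommGroup E] [NormedSpace ℝ E]

/-- The radial retraction of a normed space onto the closed ball of radius `R > 0` around `0`. It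
is used to truncate vector fields. -/
noncomputable def radialRetract (R : ℝ) (x : E) : E := (R / max R ‖x‖) • x

lemma radialRetract_of_norm_le {R : ℝ} (hR : 0 < R) {x : E} (hx : ‖x‖ ≤ R) :
    radialRetract R x = x := by
  simp [radialRetract, max_eq_left hx, hR.ne']

lemma norm_radialRetract_le {R : ℝ} (hR : 0 < R) (x : E) : ‖radialRetract R x‖ ≤ R := by
  have hmax : 0 < max R ‖x‖ := lt_max_of_lt_left hR
  rw [radialRetract, norm_smul, Real.norm_of_nonneg (by positivity), div_mul_eq_mul_div,
    div_le_iff₀ hmax]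
  exact mul_le_mul_of_nonneg_left (le_max_right _ _) hR.le

lemma norm_radialRetract_le_norm {R : ℝ} (hR : 0 < R) (x : E) : ‖radialRetract R x‖ ≤ ‖x‖ := by
  have hmax : 0 < max R ‖x‖ := lt_max_of_lt_left hR
  rw [radialRetract, norm_smul, Real.norm_of_nonneg (by positivity)]
  exact mul_le_of_le_one_left (norm_nonneg _) ((div_le_one hmax).2 (le_max_left _ _))

lemma lipschitzWith_radialRetract {R : ℝ} (hR : 0 < R) :
    LipschitzWith 2 (radialRetract R : E → E) := by
  refine LipschitzWith.of_dist_le_mul fun x y => ?_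
  rw [dist_eq_norm, dist_eq_norm, NNReal.coe_ofNat, two_mul]
  have hx : 0 < max R ‖x‖ := lt_max_of_lt_left hR
  have hy : 0 < max R ‖y‖ := lt_max_of_lt_left hR
  have hle : R / max R ‖x‖ ≤ 1 := (div_le_one hx).2 (le_max_left _ _)
  have hsub : radialRetract R x - radialRetract R y = (R / max R ‖x‖) • (x - y)
      + (R / max R ‖x‖ * ((max R ‖y‖ - max R ‖x‖) / max R ‖y‖)) • y := by
    have : R / max R ‖x‖ * ((max R ‖y‖ - max R ‖x‖) / max R ‖y‖)
        = R / max R ‖x‖ - R / max R ‖y‖ := by field_simp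
    rw [this, radialRetract, radialRetract]
    module
  have hmax : |max R ‖y‖ - max R ‖x‖| ≤ ‖x - y‖ := calc
    |max R ‖y‖ - max R ‖x‖| ≤ max |R - R| |‖y‖ - ‖x‖| := abs_max_sub_max_le_max _ _ _ _
    _ ≤ ‖x - y‖ := by simpa [norm_sub_rev x y] using abs_norm_sub_norm_le y x
  have hfirst : ‖(R / max R ‖x‖) • (x - y)‖ ≤ ‖x - y‖ := by
    rw [norm_smul, Real.norm_of_nonneg (by positivity)]
    exact mul_le_of_le_one_left (norm_nonneg _) hle
  have hsecond : ‖(R / max R ‖x‖ * ((max R ‖y‖ - max R ‖x‖) / max R ‖y‖)) • y‖ ≤ ‖x - y‖ := calc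
    _ = R / max R ‖x‖ * (|max R ‖y‖ - max R ‖x‖| * (‖y‖ / max R ‖y‖)) := by
      rw [norm_smul, norm_mul, Real.norm_of_nonneg (by positivity), norm_div, Real.norm_eq_abs,
        Real.norm_of_nonneg hy.le]
      ring
    _ ≤ 1 * (‖x - y‖ * 1) := by
      gcongr
      exact (div_le_one hy).2 (le_max_right _ _)
    _ = ‖x - y‖ := by ring
  exact hsub ▸ norm_add_le_of_le hfirst hsecond

variable {f : ℝ → E → E} {K : ℝ≥0} {a b : ℝ}

lemma hasDerivWithinAt_Ici_of_Icc {x : ℝ → E} {x' : E} {t : ℝ}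
    (hx : HasDerivWithinAt x x' (Icc a b) t) (ht : t ∈ Ico a b) :
    HasDerivWithinAt x x' (Ici t) t :=
  hx.mono_of_mem_nhdsWithin (Icc_mem_nhdsGE_of_mem ht)

lemma dist_le_of_isIntegralCurveOn_Icc (hf : ∀ t ∈ Icc a b, LipschitzWith K (f t)) {x y : ℝ → E}
    (hx : IsIntegralCurveOn x f (Icc a b)) (hy : IsIntegralCurveOn y f (Icc a b)) {t : ℝ}
    (ht : t ∈ Icc a b) : dist (x t) (y t) ≤ Real.exp (K * (b - a)) * dist (x a) (y a) := by
  have hdist := dist_le_of_trajectories_ODE_of_mem (v := f) (s := fun _ => univ) (K := K)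
    (fun t ht => (hf t (Ico_subset_Icc_self ht)).lipschitzOnWith)
    hx.continuousOn (fun t ht => hasDerivWithinAt_Ici_of_Icc (hx t (Ico_subset_Icc_self ht)) ht)
    (fun _ _ => trivial) hy.continuousOn
    (fun t ht => hasDerivWithinAt_Ici_of_Icc (hy t (Ico_subset_Icc_self ht)) ht)
    (fun _ _ => trivial) le_rfl t ht
  rw [mul_comm] at hdist
  refine hdist.trans ?_
  gcongr
  exact ht.2

lemma eqOn_of_isIntegralCurveOn_Icc (hf : ∀ t ∈ Icc a b, LipschitzWith K (f t)) {x y : ℝ → E}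
    (hx : IsIntegralCurveOn x f (Icc a b)) (hy : IsIntegralCurveOn y f (Icc a b))
    (hxy : x a = y a) : EqOn x y (Icc a b) := fun t ht => by
  simpa [hxy] using dist_le_of_isIntegralCurveOn_Icc hf hx hy ht

lemma exists_isIntegralCurveOn_of_bounded [CompleteSpace E] (hab : a ≤ b)
    (hf : ∀ t ∈ Icc a b, LipschitzWith K (f t)) (hc : ∀ x, ContinuousOn (fun t => f t x) (Icc a b))
    {L : ℝ≥0} (hL : ∀ t ∈ Icc a b, ∀ x, ‖f t x‖ ≤ L) (x₀ : E) :
    ∃ x, IsIntegralCurveOn x f (Icc a b) ∧ x a = x₀ := by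
  have hpl : IsPicardLindelof f (⟨a, left_mem_Icc.2 hab⟩ : Icc a b) x₀
      (L * (b - a).toNNReal) 0 L K :=
    { lipschitzOnWith := fun t ht => (hf t ht).lipschitzOnWith
      continuousOn := fun x _ => hc x
      norm_le := fun t ht x _ => hL t ht x
      mul_max_le := by simp [hab] }
  obtain ⟨x, hx₀, hx⟩ := hpl.exists_eq_forall_mem_Icc_hasDerivWithinAt₀
  exact ⟨x, hx, hx₀⟩

-- Composed with a radial retraction the field becomes bounded, and Grönwall's inequality keeps the
-- solution inside the ball where the field was not changed.
lemma exists_isIntegralCurveOn [CompleteSpace E] (hab : a ≤ b)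
    (hf : ∀ t ∈ Icc a b, LipschitzWith K (f t)) (hc : ∀ x, ContinuousOn (fun t => f t x) (Icc a b))
    (x₀ : E) : ∃ x, IsIntegralCurveOn x f (Icc a b) ∧ x a = x₀ := by
  obtain ⟨c, hc₀⟩ := isCompact_Icc.exists_bound_of_continuousOn (hc 0)
  have hc_nonneg : 0 ≤ c := (norm_nonneg _).trans (hc₀ a (left_mem_Icc.2 hab))
  have hgrowth : ∀ t ∈ Icc a b, ∀ x, ‖f t x‖ ≤ K * ‖x‖ + c := fun t ht x => calc
    ‖f t x‖ ≤ ‖f t x - f t 0‖ + ‖f t 0‖ := norm_le_norm_sub_add _ _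
    _ ≤ K * ‖x‖ + c := by
      gcongr
      · simpa [dist_eq_norm] using (hf t ht).dist_le_mul x 0
      · exact hc₀ t ht
  have hmono := gronwallBound_mono (norm_nonneg x₀) hc_nonneg K.coe_nonneg
  set R := gronwallBound ‖x₀‖ K c (b - a) + 1
  have hR : 0 < R := by
    have := hmono (sub_nonneg.2 hab)
    rw [gronwallBound_x0] at this
    linarith [norm_nonneg x₀]
  obtain ⟨x, hx, hx₀⟩ := exists_isIntegralCurveOn_of_bounded (L := K * R.toNNReal + c.toNNReal)
    hab (f := fun t x => f t (radialRetract R x))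
    (fun t ht => (hf t ht).comp (lipschitzWith_radialRetract hR)) (fun x => hc _)
    (fun t ht x => (hgrowth t ht _).trans (by
      rw [NNReal.coe_add, NNReal.coe_mul, Real.coe_toNNReal _ hR.le, Real.coe_toNNReal _ hc_nonneg]
      gcongr
      exact norm_radialRetract_le hR x)) x₀
  have hbound : ∀ t ∈ Icc a b, ‖x t‖ ≤ R := fun t ht => by
    have hgronwall := norm_le_gronwallBound_of_norm_deriv_right_le (K := K) (ε := c) (δ := ‖x₀‖)
      hx.continuousOn (fun t ht => hasDerivWithinAt_Ici_of_Icc (hx t (Ico_subset_Icc_self ht)) ht)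
      (by rw [hx₀]) (fun t ht => (hgrowth t (Ico_subset_Icc_self ht) _).trans (by
        gcongr
        exact norm_radialRetract_le_norm hR _)) t ht
    linarith [hmono (sub_le_sub_right ht.2 a)]
  refine ⟨x, fun t ht => ?_, hx₀⟩
  simpa only [radialRetract_of_norm_le hR (hbound t ht)] using hx t ht

lemma exists_lipschitzWith_flow [CompleteSpace E] (hab : a ≤ b)
    (hf : ∀ t ∈ Icc a b, LipschitzWith K (f t))
    (hc : ∀ x, ContinuousOn (fun t => f t x) (Icc a b)) :
    ∃ (K' : ℝ≥0) (φ : E → ℝ → E), (∀ x, IsIntegralCurveOn (φ x) f (Icc a b) ∧ φ x a = x) ∧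
      ∀ t ∈ Icc a b, LipschitzWith K' fun x => φ x t := by
  choose φ hφ using exists_isIntegralCurveOn hab hf hc
  refine ⟨(Real.exp (K * (b - a))).toNNReal, φ, hφ, fun t ht =>
    LipschitzWith.of_dist_le_mul fun x y => ?_⟩
  rw [Real.coe_toNNReal _ (Real.exp_pos _).le]
  simpa only [(hφ _).2] using dist_le_of_isIntegralCurveOn_Icc hf (hφ x).1 (hφ y).1 ht

lemma exists_isIntegralCurveOn_of_linear [CompleteSpace E] {L : ℝ → E →L[ℝ] E} (hab : a ≤ b)
    (hL : ContinuousOn L (Icc a b)) (x₀ : E) :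
    ∃ x, IsIntegralCurveOn x (fun t y => L t y) (Icc a b) ∧ x a = x₀ := by
  obtain ⟨c, hc⟩ := isCompact_Icc.exists_bound_of_continuousOn hL
  exact exists_isIntegralCurveOn hab
    (fun t ht => (L t).lipschitz.weaken (NNReal.coe_le_coe.1 ((hc t ht).trans c.le_coe_toNNReal)))
    (fun y => hL.clm_apply continuousOn_const) x₀

end ODE

section IntervalCalculus

open Set MeasureTheory

variable {E : Type*} [NormedAddCommGroup E] [NormedSpace ℝ E] {a b : ℝ}

lemma eq_of_hasDerivWithinAt_Icc_zero {f : ℝ → E}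
    (hf : ∀ t ∈ Icc a b, HasDerivWithinAt f 0 (Icc a b) t) {t : ℝ} (ht : t ∈ Icc a b) :
    f t = f a :=
  constant_of_has_deriv_right_zero (fun t ht => (hf t ht).continuousWithinAt)
    (fun t ht => hasDerivWithinAt_Ici_of_Icc (hf t (Ico_subset_Icc_self ht)) ht) t ht

lemma hasDerivWithinAt_integral_Icc [CompleteSpace E] {f : ℝ → E} (hf : ContinuousOn f (Icc a b))
    {t : ℝ} (ht : t ∈ Icc a b) :
    HasDerivWithinAt (fun u => ∫ s in a..u, f s) (f t) (Icc a b) t := by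
  have : Fact (t ∈ Icc a b) := ⟨ht⟩
  exact intervalIntegral.integral_hasDerivWithinAt_right
    ((hf.mono (Icc_subset_Icc_right ht.2)).intervalIntegrable_of_Icc ht.1)
    (hf.stronglyMeasurableAtFilter_nhdsWithin measurableSet_Icc t) (hf t ht)

lemma integral_eq_sub_of_hasDerivWithinAt_Icc [CompleteSpace E] {f f' : ℝ → E} (hab : a ≤ b)
    (hf : ∀ t ∈ Icc a b, HasDerivWithinAt f (f' t) (Icc a b) t)
    (hf' : ContinuousOn f' (Icc a b)) : ∫ t in a..b, f' t = f b - f a :=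
  intervalIntegral.integral_eq_sub_of_hasDeriv_right_of_le hab
    (fun t ht => (hf t ht).continuousWithinAt)
    (fun t ht => (hasDerivWithinAt_Ici_of_Icc (hf t (Ioo_subset_Icc_self ht))
      (Ioo_subset_Ico_self ht)).mono Ioi_subset_Ici_self)
    (hf'.intervalIntegrable_of_Icc hab)

lemma eq_zero_of_integral_eq_zero {f : ℝ → ℝ} (hab : a < b) (hf : ContinuousOn f (Icc a b))
    (hnonneg : ∀ t ∈ Icc a b, 0 ≤ f t) (hint : ∫ t in a..b, f t = 0) {t : ℝ}
    (ht : t ∈ Icc a b) : f t = 0 := by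
  by_contra hne
  exact (intervalIntegral.integral_pos hab hf (fun s hs => hnonneg s (Ioc_subset_Icc_self hs))
    ⟨t, ht, (hnonneg t ht).lt_of_ne' hne⟩).ne' hint

lemma le_of_hasDerivWithinAt_Icc_nonneg {f f' : ℝ → ℝ} (hab : a ≤ b)
    (hf : ∀ t ∈ Icc a b, HasDerivWithinAt f (f' t) (Icc a b) t)
    (hf' : ∀ t ∈ Icc a b, 0 ≤ f' t) : f a ≤ f b :=
  monotoneOn_of_hasDerivWithinAt_nonneg (convex_Icc a b)
    (fun t ht => (hf t ht).continuousWithinAt)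
    (fun t ht => (hf t (interior_subset ht)).mono interior_subset)
    (fun t ht => hf' t (interior_subset ht)) (left_mem_Icc.2 hab) (right_mem_Icc.2 hab) hab

variable [FiniteDimensional ℝ E] {F : Type*} [NormedAddCommGroup F] [NormedSpace ℝ F]

lemma hasDerivWithinAt_linearMap_comp (l : E →ₗ[ℝ] F) {x : ℝ → E} {x' : E} {s : Set ℝ} {t : ℝ}
    (hx : HasDerivWithinAt x x' s t) : HasDerivWithinAt (fun u => l (x u)) (l x') s t :=
  l.toContinuousLinearMap.hasFDerivAt.comp_hasDerivWithinAt t hx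

lemma integral_linearMap_comp [CompleteSpace F] (l : E →ₗ[ℝ] F) {x : ℝ → E} (hab : a ≤ b)
    (hx : ContinuousOn x (Icc a b)) : ∫ t in a..b, l (x t) = l (∫ t in a..b, x t) :=
  haveI := FiniteDimensional.complete ℝ E
  l.toContinuousLinearMap.intervalIntegral_comp_comm (hx.intervalIntegrable_of_Icc hab)

end IntervalCalculus

section PosSemidef

open scoped MatrixOrder ComplexOrder Matrix.Norms.L2Operator

variable {ι κ : Type*}

lemma transpose_eq_of_posSemidef {A : Matrix ι ι ℝ} (hA : A.PosSemidef) : Aᵀ = A := by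
  simpa using hA.isHermitian.eq

lemma posSemidef_vecMulVec_self [Finite ι] (x : ι → ℝ) : (vecMulVec x x).PosSemidef := by
  simpa using posSemidef_vecMulVec_self_star x

variable [Fintype ι]

lemma exists_mul_transpose_eq_of_posSemidef {A : Matrix ι ι ℝ} (hA : A.PosSemidef) :
    ∃ L : Matrix ι ι ℝ, L * Lᵀ = A := by
  classical
  obtain ⟨B, rfl⟩ := CStarAlgebra.nonneg_iff_eq_star_mul_self.mp hA.nonneg
  exact ⟨Bᵀ, by simp [star_eq_conjTranspose]⟩

lemma posSemidef_mul_mul_transpose [Finite κ] {A : Matrix ι ι ℝ} (hA : A.PosSemidef)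
    (X : Matrix κ ι ℝ) : (X * A * Xᵀ).PosSemidef := by
  simpa using hA.mul_mul_conjTranspose_same X

lemma trace_mul_vecMulVec_self (A : Matrix ι ι ℝ) (x : ι → ℝ) :
    (A * vecMulVec x x).trace = x ⬝ᵥ A *ᵥ x := by
  rw [mul_vecMulVec, trace_vecMulVec, dotProduct_comm]

lemma trace_mul_nonneg {A B : Matrix ι ι ℝ} (hA : A.PosSemidef) (hB : B.PosSemidef) :
    0 ≤ (A * B).trace := by
  obtain ⟨L, rfl⟩ := exists_mul_transpose_eq_of_posSemidef hB
  rw [← Matrix.mul_assoc, trace_mul_cycle]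
  simpa using (posSemidef_mul_mul_transpose hA Lᵀ).trace_nonneg

lemma eq_zero_of_trace_mul_posDef_eq_zero {A B : Matrix ι ι ℝ} (hA : A.PosSemidef)
    (hB : B.PosDef) (hAB : (A * B).trace = 0) : A = 0 := by
  classical
  obtain ⟨L, rfl⟩ := exists_mul_transpose_eq_of_posSemidef hB.posSemidef
  have hL : IsUnit L := isUnit_of_mul_isUnit_left hB.isUnit
  have hzero : Lᵀ * A * L = 0 := by
    have hpsd := posSemidef_mul_mul_transpose hA Lᵀ
    rw [transpose_transpose] at hpsd
    rwa [← hpsd.trace_eq_zero_iff, ← trace_mul_cycle, Matrix.mul_assoc]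
  rwa [hL.mul_left_eq_zero, ((isUnit_transpose L).2 hL).mul_right_eq_zero] at hzero

lemma mul_eq_zero_of_mul_mul_transpose_eq_zero {A : Matrix ι ι ℝ} (hA : A.PosSemidef)
    {X : Matrix κ ι ℝ} (hX : X * A * Xᵀ = 0) : X * A = 0 := by
  obtain ⟨L, rfl⟩ := exists_mul_transpose_eq_of_posSemidef hA
  have hXL : X * L = 0 := by
    rw [← self_mul_conjTranspose_eq_zero, conjTranspose_eq_transpose_of_trivial, transpose_mul]
    simpa only [Matrix.mul_assoc] using hX
  rw [← Matrix.mul_assoc, hXL, Matrix.zero_mul]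

end PosSemidef

section MatrixCalculus

open Set Metric Filter
open scoped Topology

attribute [local instance] Matrix.frobeniusNormedAddCommGroup Matrix.frobeniusNormedSpace
  Matrix.frobeniusNormedRing Matrix.frobeniusNormedAlgebra

section Deriv

variable {ι κ μ : Type*} [Fintype ι] {s : Set ℝ} {t : ℝ}

lemma continuousOn_trace {X : ℝ → Matrix ι ι ℝ} (hX : ContinuousOn X s) :
    ContinuousOn (fun t => (X t).trace) s :=
  continuous_id.matrix_trace.comp_continuousOn hX

lemma continuousOn_matrix_mul {X : ℝ → Matrix κ ι ℝ} {Y : ℝ → Matrix ι μ ℝ}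
    (hX : ContinuousOn X s) (hY : ContinuousOn Y s) :
    ContinuousOn (fun t => X t * Y t) s := by
  rw [continuousOn_iff_continuous_domRestrict] at *
  exact hX.matrix_mul hY

variable [Fintype κ] [Fintype μ]

lemma hasDerivWithinAt_matrix_iff {X : ℝ → Matrix ι κ ℝ} {X' : Matrix ι κ ℝ} :
    HasDerivWithinAt X X' s t ↔ ∀ i j, HasDerivWithinAt (fun u => X u i j) (X' i j) s t := by
  classical
  refine ⟨fun hX i j => hasDerivWithinAt_linearMap_comp (entryLinearMap ℝ ℝ i j) hX, fun hX => ?_⟩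
  have hsum : HasDerivWithinAt (fun u => ∑ i, ∑ j, X u i j • single i j (1 : ℝ))
      (∑ i, ∑ j, X' i j • single i j (1 : ℝ)) s t :=
    .fun_sum fun i _ => .fun_sum fun j _ => (hX i j).smul_const _
  simpa only [smul_single, smul_eq_mul, mul_one, ← matrix_eq_sum_single] using hsum

lemma hasDerivWithinAt_transpose {X : ℝ → Matrix ι κ ℝ} {X' : Matrix ι κ ℝ}
    (hX : HasDerivWithinAt X X' s t) : HasDerivWithinAt (fun u => (X u)ᵀ) X'ᵀ s t :=
  hasDerivWithinAt_linearMap_comp (transposeLinearEquiv ι κ ℝ ℝ).toLinearMap hX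

lemma hasDerivWithinAt_trace {X : ℝ → Matrix ι ι ℝ} {X' : Matrix ι ι ℝ}
    (hX : HasDerivWithinAt X X' s t) : HasDerivWithinAt (fun u => (X u).trace) X'.trace s t :=
  hasDerivWithinAt_linearMap_comp (traceLinearMap ι ℝ ℝ) hX

lemma hasDerivWithinAt_matrix_mul {X : ℝ → Matrix ι κ ℝ} {X' : Matrix ι κ ℝ}
    {Y : ℝ → Matrix κ μ ℝ} {Y' : Matrix κ μ ℝ} (hX : HasDerivWithinAt X X' s t)
    (hY : HasDerivWithinAt Y Y' s t) :
    HasDerivWithinAt (fun u => X u * Y u) (X' * Y t + X t * Y') s t := by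
  rw [hasDerivWithinAt_matrix_iff] at *
  intro i j
  simpa only [Matrix.add_apply, mul_apply, ← Finset.sum_add_distrib] using
    HasDerivWithinAt.fun_sum fun k _ => (hX i k).fun_mul (hY k j)

end Deriv

variable {ι : Type*} [Fintype ι] {a b : ℝ}

lemma posSemidef_sub_of_hasDerivWithinAt {Y Y' : ℝ → Matrix ι ι ℝ}
    (hY : ∀ t ∈ Icc a b, HasDerivWithinAt Y (Y' t) (Icc a b) t)
    (hY' : ∀ t ∈ Icc a b, (Y' t).PosSemidef) {s t : ℝ} (hs : a ≤ s) (hst : s ≤ t) (ht : t ≤ b) :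
    (Y t - Y s).PosSemidef := by
  have hskew : ∀ u ∈ Icc a b, Y u - (Y u)ᵀ = Y a - (Y a)ᵀ := fun u hu =>
    eq_of_hasDerivWithinAt_Icc_zero (fun u hu => ((hY u hu).sub
      (hasDerivWithinAt_transpose (hY u hu))).congr_deriv
        (sub_eq_zero.2 (transpose_eq_of_posSemidef (hY' u hu)).symm)) hu
  have hsymm : (Y t - Y s)ᵀ = Y t - Y s := by
    have hdiff := (hskew t ⟨hs.trans hst, ht⟩).trans (hskew s ⟨hs, hst.trans ht⟩).symm
    rw [transpose_sub]
    exact (sub_eq_sub_iff_sub_eq_sub.1 hdiff).symm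
  have hsub : Icc s t ⊆ Icc a b := Icc_subset_Icc hs ht
  refine .of_dotProduct_mulVec_nonneg (by simpa [IsHermitian] using hsymm) fun x => ?_
  have hmono := le_of_hasDerivWithinAt_Icc_nonneg hst (f := fun u => (Y u * vecMulVec x x).trace)
    (fun u hu => hasDerivWithinAt_trace (hasDerivWithinAt_matrix_mul
      ((hY u (hsub hu)).mono hsub) (hasDerivWithinAt_const u _ (vecMulVec x x))))
    (fun u hu => by simpa using
      trace_mul_nonneg (hY' u (hsub hu)) (posSemidef_vecMulVec_self x))
  rwa [star_trivial, ← trace_mul_vecMulVec_self, Matrix.sub_mul, trace_sub, sub_nonneg]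

lemma posSemidef_integral {N : ℝ → Matrix ι ι ℝ} (hab : a ≤ b) (hN : ContinuousOn N (Icc a b))
    (hpsd : ∀ t ∈ Icc a b, (N t).PosSemidef) : (∫ t in a..b, N t).PosSemidef := by
  have := FiniteDimensional.complete ℝ (Matrix ι ι ℝ)
  simpa using posSemidef_sub_of_hasDerivWithinAt
    (fun t ht => hasDerivWithinAt_integral_Icc hN ht) hpsd le_rfl hab le_rfl

lemma exists_abs_trace_mul_le (ι : Type*) [Fintype ι] :
    ∃ c : ℝ, 0 ≤ c ∧ ∀ X Y : Matrix ι ι ℝ, |(X * Y).trace| ≤ c * (‖X‖ * ‖Y‖) := by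
  obtain ⟨c, hc, hbound⟩ := SemilinearMapClass.bound_of_continuous (traceLinearMap ι ℝ ℝ)
    (LinearMap.continuous_of_finiteDimensional _)
  refine ⟨c, hc.le, fun X Y => (hbound (X * Y)).trans ?_⟩
  gcongr
  exact frobenius_norm_mul X Y

lemma eventually_posDef_of_transpose_eq {A : Matrix ι ι ℝ} (hA : A.PosDef) :
    ∀ᶠ X in 𝓝 A, Xᵀ = X → X.PosDef := by
  have hsphere : ∀ᶠ X in 𝓝 A, ∀ x ∈ sphere (0 : ι → ℝ) 1, 0 < x ⬝ᵥ X *ᵥ x := by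
    refine (isCompact_sphere (0 : ι → ℝ) 1).eventually_forall_of_forall_eventually fun x hx => ?_
    have hcont : Continuous fun p : Matrix ι ι ℝ × (ι → ℝ) => p.2 ⬝ᵥ p.1 *ᵥ p.2 := by fun_prop
    exact hcont.continuousAt.eventually_const_lt
      (by simpa using hA.dotProduct_mulVec_pos (ne_zero_of_mem_unit_sphere ⟨x, hx⟩))
  filter_upwards [hsphere] with X hX hsymm
  refine .of_dotProduct_mulVec_pos (by simpa [IsHermitian] using hsymm) fun x hx => ?_
  have hunit := hX (‖x‖⁻¹ • x) (by simp [norm_smul, hx])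
  rw [mulVec_smul, smul_dotProduct, dotProduct_smul, smul_smul] at hunit
  exact pos_of_mul_pos_right hunit (mul_self_nonneg _)

lemma eventually_posDef_add_smul {A E : Matrix ι ι ℝ} (hA : A.PosDef) (hE : Eᵀ = E) :
    ∀ᶠ ε in 𝓝 (0 : ℝ), (A + ε • E).PosDef := by
  have hlim : Tendsto (fun ε : ℝ => A + ε • E) (𝓝 0) (𝓝 A) :=
    Continuous.tendsto' (by fun_prop) 0 A (by rw [zero_smul, add_zero])
  filter_upwards [hlim.eventually (eventually_posDef_of_transpose_eq hA)] with ε hε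
  exact hε (by rw [transpose_add, transpose_smul, hE, transpose_eq_of_posSemidef hA.posSemidef])

lemma exists_norm_le_of_abs_dotProduct_mulVec_le (q : (ι → ℝ) → ℝ) :
    ∃ R, ∀ P : Matrix ι ι ℝ, Pᵀ = P → (∀ x, |x ⬝ᵥ P *ᵥ x| ≤ q x) → ‖P‖ ≤ R := by
  classical
  let entryBound (i j : ι) : ℝ :=
    q (Pi.single i 1 + Pi.single j 1) + q (Pi.single i 1) + q (Pi.single j 1)
  refine ⟨∑ i, ∑ j, entryBound i j * ‖single i j (1 : ℝ)‖, fun P hP hq => ?_⟩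
  have hentry : ∀ i j, |P i j| ≤ entryBound i j := by
    intro i j
    have hpolar : 2 * P i j =
        (Pi.single i 1 + Pi.single j 1) ⬝ᵥ P *ᵥ (Pi.single i 1 + Pi.single j 1)
        - Pi.single i 1 ⬝ᵥ P *ᵥ Pi.single i 1 - Pi.single j 1 ⬝ᵥ P *ᵥ Pi.single j 1 := by
      have hji : P j i = P i j := congrFun₂ hP i j
      simp only [mulVec_add, mulVec_single_one, dotProduct_add, add_dotProduct,
        single_one_dotProduct, col_apply, hji]
      ring
    have hij := abs_le.1 (hq (Pi.single i 1 + Pi.single j 1))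
    have hi := abs_le.1 (hq (Pi.single i 1))
    have hj := abs_le.1 (hq (Pi.single j 1))
    simp only [entryBound]
    exact abs_le.2 ⟨by linarith, by linarith⟩
  calc ‖P‖ = ‖∑ i, ∑ j, P i j • single i j (1 : ℝ)‖ := by
        simp only [smul_single, smul_eq_mul, mul_one, ← matrix_eq_sum_single]
    _ ≤ ∑ i, ∑ j, ‖P i j • single i j (1 : ℝ)‖ :=
      norm_sum_le_of_le _ fun i _ => norm_sum_le _ _
    _ ≤ ∑ i, ∑ j, entryBound i j * ‖single i j (1 : ℝ)‖ := by
      gcongr with i _ j _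
      rw [norm_smul, Real.norm_eq_abs]
      gcongr
      exact hentry i j

end MatrixCalculus

section LinearSystems

open Set

attribute [local instance] Matrix.frobeniusNormedAddCommGroup Matrix.frobeniusNormedSpace
  Matrix.frobeniusNormedRing Matrix.frobeniusNormedAlgebra

variable {ι : Type*} [Fintype ι] {a b : ℝ}

lemma hasDerivWithinAt_mul_mul_transpose {U S : ℝ → Matrix ι ι ℝ} {U' S' : Matrix ι ι ℝ}
    {s : Set ℝ} {t : ℝ} (hU : HasDerivWithinAt U U' s t) (hS : HasDerivWithinAt S S' s t) :
    HasDerivWithinAt (fun u => U u * S u * (U u)ᵀ)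
      (U' * S t * (U t)ᵀ + U t * S' * (U t)ᵀ + U t * S t * U'ᵀ) s t := by
  simpa only [Matrix.add_mul] using hasDerivWithinAt_matrix_mul
    (hasDerivWithinAt_matrix_mul hU hS) (hasDerivWithinAt_transpose hU)

/-- The matrix Lyapunov equation `S' = L S + S Lᵀ + N` on `[a, b]`, with one-sided derivatives at
the ends. It governs the covariance of a linear diffusion with drift `L` and noise intensity `N`. -/
def IsLyapunov (a b : ℝ) (L N S : ℝ → Matrix ι ι ℝ) : Prop :=
  ∀ t ∈ Icc a b, HasDerivWithinAt S (L t * S t + S t * (L t)ᵀ + N t) (Icc a b) t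

lemma IsLyapunov.continuousOn {L N S : ℝ → Matrix ι ι ℝ} (hS : IsLyapunov a b L N S) :
    ContinuousOn S (Icc a b) := fun t ht => (hS t ht).continuousWithinAt

lemma IsLyapunov.transpose {L N S : ℝ → Matrix ι ι ℝ} (hS : IsLyapunov a b L N S)
    (hN : ∀ t ∈ Icc a b, (N t)ᵀ = N t) : IsLyapunov a b L N fun t => (S t)ᵀ := fun t ht =>
  (hasDerivWithinAt_transpose (hS t ht)).congr_deriv (by
    rw [transpose_add, transpose_add, transpose_mul, transpose_mul, transpose_transpose, hN t ht,
      add_comm (_ * _)])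

lemma IsLyapunov.congr {L L' N S S' : ℝ → Matrix ι ι ℝ} (hS : IsLyapunov a b L N S)
    (hL : EqOn L' L (Icc a b)) (h : EqOn S' S (Icc a b)) : IsLyapunov a b L' N S' := fun t ht => by
  rw [h ht, hL ht]
  exact (hS t ht).congr h (h ht)

variable {L N Φ W S S₁ S₂ : ℝ → Matrix ι ι ℝ}

section FundamentalPair

variable [DecidableEq ι]

/-- `Φ` is a fundamental matrix of the linear equation `x' = L x` on `[a, b]`, with inverse `W`. No
initial value is prescribed. -/
structure IsFundamentalPair (a b : ℝ) (L Φ W : ℝ → Matrix ι ι ℝ) : Prop where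
  hasDerivWithinAt : ∀ t ∈ Icc a b, HasDerivWithinAt Φ (L t * Φ t) (Icc a b) t
  hasDerivWithinAt_inv : ∀ t ∈ Icc a b, HasDerivWithinAt W (-(W t * L t)) (Icc a b) t
  inv_mul : ∀ t ∈ Icc a b, W t * Φ t = 1

namespace IsFundamentalPair

lemma continuousOn (hΦ : IsFundamentalPair a b L Φ W) : ContinuousOn Φ (Icc a b) :=
  fun t ht => (hΦ.hasDerivWithinAt t ht).continuousWithinAt

lemma continuousOn_inv (hΦ : IsFundamentalPair a b L Φ W) : ContinuousOn W (Icc a b) :=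
  fun t ht => (hΦ.hasDerivWithinAt_inv t ht).continuousWithinAt

lemma mul_inv (hΦ : IsFundamentalPair a b L Φ W) {t : ℝ} (ht : t ∈ Icc a b) : Φ t * W t = 1 :=
  mul_eq_one_comm.1 (hΦ.inv_mul t ht)

lemma adjoint (hΦ : IsFundamentalPair a b L Φ W) :
    IsFundamentalPair a b (fun t => -(L t)ᵀ) (fun t => (W t)ᵀ) fun t => (Φ t)ᵀ where
  hasDerivWithinAt t ht := (hasDerivWithinAt_transpose
    (hΦ.hasDerivWithinAt_inv t ht)).congr_deriv (by rw [transpose_neg, transpose_mul, neg_mul])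
  hasDerivWithinAt_inv t ht := (hasDerivWithinAt_transpose
    (hΦ.hasDerivWithinAt t ht)).congr_deriv (by rw [transpose_mul, mul_neg, neg_neg])
  inv_mul t ht := by rw [← transpose_mul, hΦ.inv_mul t ht, transpose_one]

lemma mul_conj_mul (hΦ : IsFundamentalPair a b L Φ W) {t : ℝ} (ht : t ∈ Icc a b)
    (X : Matrix ι ι ℝ) : Φ t * (W t * X * (W t)ᵀ) * (Φ t)ᵀ = X := by
  rw [← mul_assoc, ← mul_assoc, hΦ.mul_inv ht, one_mul, mul_assoc, hΦ.adjoint.mul_inv ht,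
    mul_one]

lemma inv_conj_mul (hΦ : IsFundamentalPair a b L Φ W) {t : ℝ} (ht : t ∈ Icc a b)
    (X : Matrix ι ι ℝ) : W t * (Φ t * X * (Φ t)ᵀ) * (W t)ᵀ = X := by
  rw [← mul_assoc, ← mul_assoc, hΦ.inv_mul t ht, one_mul, mul_assoc, hΦ.adjoint.inv_mul t ht,
    mul_one]

lemma hasDerivWithinAt_conj (hΦ : IsFundamentalPair a b L Φ W) {Y : ℝ → Matrix ι ι ℝ}
    {X : Matrix ι ι ℝ} {t : ℝ} (ht : t ∈ Icc a b)
    (hY : HasDerivWithinAt Y (W t * X * (W t)ᵀ) (Icc a b) t) :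
    HasDerivWithinAt (fun u => Φ u * Y u * (Φ u)ᵀ)
      (L t * (Φ t * Y t * (Φ t)ᵀ) + Φ t * Y t * (Φ t)ᵀ * (L t)ᵀ + X) (Icc a b) t := by
  refine (hasDerivWithinAt_mul_mul_transpose (hΦ.hasDerivWithinAt t ht) hY).congr_deriv ?_
  rw [hΦ.mul_conj_mul ht, transpose_mul]
  noncomm_ring

lemma hasDerivWithinAt_conj_inv_iff (hΦ : IsFundamentalPair a b L Φ W) {X : Matrix ι ι ℝ} {t : ℝ}
    (ht : t ∈ Icc a b) :
    HasDerivWithinAt (fun u => W u * S u * (W u)ᵀ) (W t * X * (W t)ᵀ) (Icc a b) t ↔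
      HasDerivWithinAt S (L t * S t + S t * (L t)ᵀ + X) (Icc a b) t := by
  refine ⟨fun h => ?_, fun h => ?_⟩
  · refine ((hΦ.hasDerivWithinAt_conj ht h).congr_deriv ?_).congr
      (fun u hu => (hΦ.mul_conj_mul hu (S u)).symm) (hΦ.mul_conj_mul ht (S t)).symm
    rw [hΦ.mul_conj_mul ht]
  · refine (hasDerivWithinAt_mul_mul_transpose (hΦ.hasDerivWithinAt_inv t ht) h).congr_deriv ?_
    rw [transpose_neg, transpose_mul]
    noncomm_ring

lemma isLyapunov_iff (hΦ : IsFundamentalPair a b L Φ W) : IsLyapunov a b L N S ↔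
    ∀ t ∈ Icc a b, HasDerivWithinAt (fun u => W u * S u * (W u)ᵀ) (W t * N t * (W t)ᵀ)
      (Icc a b) t :=
  forall₂_congr fun _ ht => (hΦ.hasDerivWithinAt_conj_inv_iff ht).symm

lemma posDef_conj_inv_iff (hΦ : IsFundamentalPair a b L Φ W) {t : ℝ} (ht : t ∈ Icc a b)
    {X : Matrix ι ι ℝ} : (W t * X * (W t)ᵀ).PosDef ↔ X.PosDef := by
  simpa [star_eq_conjTranspose] using
    (IsUnit.of_mul_eq_one _ (hΦ.inv_mul t ht)).posDef_star_right_conjugate_iff (x := X)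

end IsFundamentalPair

lemma exists_isFundamentalPair (hab : a ≤ b) (hL : ContinuousOn L (Icc a b)) :
    ∃ Φ W, IsFundamentalPair a b L Φ W := by
  have := FiniteDimensional.complete ℝ (Matrix ι ι ℝ)
  let mulLeft := ContinuousLinearMap.mul ℝ (Matrix ι ι ℝ)
  obtain ⟨Φ, hΦ, hΦa⟩ := exists_isIntegralCurveOn_of_linear hab
    (mulLeft.continuous.comp_continuousOn hL) 1
  obtain ⟨W, hW, hWa⟩ := exists_isIntegralCurveOn_of_linear hab
    (mulLeft.flip.continuous.comp_continuousOn hL).neg 1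
  refine ⟨Φ, W, hΦ, hW, fun t ht => ?_⟩
  have hconst : W t * Φ t = W a * Φ a := eq_of_hasDerivWithinAt_Icc_zero (f := fun t => W t * Φ t)
    (fun u hu => (hasDerivWithinAt_matrix_mul (hW u hu) (hΦ u hu)).congr_deriv
      (by simp [mulLeft, mul_assoc])) ht
  rw [hconst, hWa, hΦa, one_mul]

end FundamentalPair

namespace IsLyapunov

lemma eqOn (hL : ContinuousOn L (Icc a b)) (hS₁ : IsLyapunov a b L N S₁)
    (hS₂ : IsLyapunov a b L N S₂) {t₀ : ℝ} (ht₀ : t₀ ∈ Icc a b) (h : S₁ t₀ = S₂ t₀) :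
    EqOn S₁ S₂ (Icc a b) := by
  classical
  obtain ⟨Φ, W, hΦ⟩ := exists_isFundamentalPair (ht₀.1.trans ht₀.2) hL
  let diff t := W t * S₁ t * (W t)ᵀ - W t * S₂ t * (W t)ᵀ
  have hconst : ∀ t ∈ Icc a b, diff t = diff a := fun t ht =>
    eq_of_hasDerivWithinAt_Icc_zero (fun u hu => ((hΦ.isLyapunov_iff.1 hS₁ u hu).sub
      (hΦ.isLyapunov_iff.1 hS₂ u hu)).congr_deriv (sub_self _)) ht
  intro t ht
  have hzero : diff t = 0 := by
    rw [hconst t ht, ← hconst t₀ ht₀]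
    simp only [diff, h, sub_self]
  rw [← hΦ.mul_conj_mul ht (S₁ t), sub_eq_zero.1 hzero, hΦ.mul_conj_mul ht]

lemma transpose_eq (hL : ContinuousOn L (Icc a b)) (hN : ∀ t ∈ Icc a b, (N t)ᵀ = N t)
    (hS : IsLyapunov a b L N S) {t₀ : ℝ} (ht₀ : t₀ ∈ Icc a b) (h : (S t₀)ᵀ = S t₀) {t : ℝ}
    (ht : t ∈ Icc a b) : (S t)ᵀ = S t :=
  eqOn hL (hS.transpose hN) hS ht₀ h ht

lemma posDef (hL : ContinuousOn L (Icc a b)) (hN : ∀ t ∈ Icc a b, (N t).PosSemidef)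
    (hS : IsLyapunov a b L N S) (hSa : (S a).PosDef) {t : ℝ} (ht : t ∈ Icc a b) :
    (S t).PosDef := by
  classical
  obtain ⟨Φ, W, hΦ⟩ := exists_isFundamentalPair (ht.1.trans ht.2) hL
  have hincr : (W t * S t * (W t)ᵀ - W a * S a * (W a)ᵀ).PosSemidef :=
    posSemidef_sub_of_hasDerivWithinAt (hΦ.isLyapunov_iff.1 hS)
      (fun u hu => posSemidef_mul_mul_transpose (hN u hu) _) le_rfl ht.1 ht.2
  have ha : a ∈ Icc a b := left_mem_Icc.2 (ht.1.trans ht.2)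
  rw [← hΦ.posDef_conj_inv_iff ht, ← sub_add_cancel (W t * S t * (W t)ᵀ), add_comm]
  exact ((hΦ.posDef_conj_inv_iff ha).2 hSa).add_posSemidef hincr

end IsLyapunov

lemma exists_isLyapunov (hab : a ≤ b) (hL : ContinuousOn L (Icc a b))
    (hN : ContinuousOn N (Icc a b)) (V : Matrix ι ι ℝ) : ∃ S, IsLyapunov a b L N S ∧ S b = V := by
  classical
  have := FiniteDimensional.complete ℝ (Matrix ι ι ℝ)
  obtain ⟨Φ, W, hΦ⟩ := exists_isFundamentalPair hab hL
  have hconj : ContinuousOn (fun t => W t * N t * (W t)ᵀ) (Icc a b) :=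
    (hΦ.continuousOn_inv.mul hN).mul
      (continuous_id.matrix_transpose.comp_continuousOn hΦ.continuousOn_inv)
  let Y u := W b * V * (W b)ᵀ + ((∫ s in a..u, W s * N s * (W s)ᵀ) -
    ∫ s in a..b, W s * N s * (W s)ᵀ)
  refine ⟨fun t => Φ t * Y t * (Φ t)ᵀ, fun t ht => hΦ.hasDerivWithinAt_conj ht
    (((hasDerivWithinAt_integral_Icc hconj ht).sub_const _).const_add _), ?_⟩
  simp only [Y, sub_self, add_zero]
  exact hΦ.mul_conj_mul (right_mem_Icc.2 hab) V

end LinearSystems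

section DriftlessSystem

open Set Filter
open scoped Topology

attribute [local instance] Matrix.frobeniusNormedAddCommGroup Matrix.frobeniusNormedSpace
  Matrix.frobeniusNormedRing Matrix.frobeniusNormedAlgebra

variable {ι : Type*} {a b : ℝ} {M Q N P P₁ P₂ S S₁ S₂ : ℝ → Matrix ι ι ℝ}
  {S0 S1 : Matrix ι ι ℝ}

/-- A continuous family of positive semidefinite matrices on `s`: the coefficients of a Riccati
equation and the noise intensity of a diffusion are of this kind. -/
structure IsPosSemidefFamily (M : ℝ → Matrix ι ι ℝ) (s : Set ℝ) : Prop where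
  continuousOn : ContinuousOn M s
  posSemidef : ∀ t ∈ s, (M t).PosSemidef

lemma IsPosSemidefFamily.mono {s s' : Set ℝ} (hM : IsPosSemidefFamily M s) (hs : s' ⊆ s) :
    IsPosSemidefFamily M s' :=
  ⟨hM.continuousOn.mono hs, fun t ht => hM.posSemidef t (hs ht)⟩

lemma IsPosSemidefFamily.transpose_eq {s : Set ℝ} (hM : IsPosSemidefFamily M s) {t : ℝ}
    (ht : t ∈ s) : (M t)ᵀ = M t :=
  transpose_eq_of_posSemidef (hM.posSemidef t ht)

variable [Fintype ι]

lemma IsPosSemidefFamily.conj {κ : Type*} [Finite κ] {s : Set ℝ} (hM : IsPosSemidefFamily M s)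
    {U : ℝ → Matrix κ ι ℝ} (hU : ContinuousOn U s) :
    IsPosSemidefFamily (fun t => U t * M t * (U t)ᵀ) s where
  continuousOn := continuousOn_matrix_mul (continuousOn_matrix_mul hU hM.continuousOn)
    (continuous_id.matrix_transpose.comp_continuousOn hU)
  posSemidef t ht := posSemidef_mul_mul_transpose (hM.posSemidef t ht) (U t)

lemma isPosSemidefFamily_mul_transpose {κ : Type*} [Fintype κ] {s : Set ℝ}
    {U : ℝ → Matrix ι κ ℝ} (hU : ContinuousOn U s) :
    IsPosSemidefFamily (fun t => U t * (U t)ᵀ) s where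
  continuousOn := continuousOn_matrix_mul hU (continuous_id.matrix_transpose.comp_continuousOn hU)
  posSemidef t _ := by simpa using posSemidef_self_mul_conjTranspose (U t)

/-- `P` is a symmetric solution of the driftless Riccati equation `P' = P M P - Q` on `[a, b]`,
with one-sided derivatives at the ends. -/
structure IsRiccati (a b : ℝ) (M Q P : ℝ → Matrix ι ι ℝ) : Prop where
  transpose_eq : ∀ t ∈ Icc a b, (P t)ᵀ = P t
  hasDerivWithinAt : ∀ t ∈ Icc a b, HasDerivWithinAt P (P t * M t * P t - Q t) (Icc a b) t

/-- The noise-free system with control Gramian density `M` is nondegenerate up to the terminal time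
`b`: no nonzero direction is left uncontrolled over a whole final interval `[τ, b]`. -/
def TerminallyNondegenerate (a b : ℝ) (M : ℝ → Matrix ι ι ℝ) : Prop :=
  ∀ τ ∈ Ico a b, ∀ v, (∀ t ∈ Icc τ b, M t *ᵥ v = 0) → v = 0

/-- The objective of the dual problem over Riccati solutions `P`. A minimiser drives the covariance
from `S0` at time `a` to `S1` at time `b` against noise of intensity `N`. -/
noncomputable def dualCost (a b : ℝ) (N : ℝ → Matrix ι ι ℝ) (S0 S1 : Matrix ι ι ℝ)
    (P : ℝ → Matrix ι ι ℝ) : ℝ :=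
  (P b * S1).trace - (P a * S0).trace - ∫ t in a..b, (P t * N t).trace

namespace IsRiccati

lemma continuousOn (hP : IsRiccati a b M Q P) : ContinuousOn P (Icc a b) :=
  fun t ht => (hP.hasDerivWithinAt t ht).continuousWithinAt

lemma mono (hP : IsRiccati a b M Q P) {a' b' : ℝ} (h : Icc a' b' ⊆ Icc a b) :
    IsRiccati a' b' M Q P :=
  ⟨fun t ht => hP.transpose_eq t (h ht), fun t ht => (hP.hasDerivWithinAt t (h ht)).mono h⟩

lemma congr {P' : ℝ → Matrix ι ι ℝ} (hP : IsRiccati a b M Q P) (h : EqOn P' P (Icc a b)) :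
    IsRiccati a b M Q P' where
  transpose_eq t ht := by rw [h ht, hP.transpose_eq t ht]
  hasDerivWithinAt t ht := by
    rw [h ht]
    exact (hP.hasDerivWithinAt t ht).congr h (h ht)

end IsRiccati

lemma hasDerivWithinAt_trace_sub_mul (hM : IsPosSemidefFamily M (Icc a b))
    (hP₁ : IsRiccati a b M Q P₁) (hP₂ : IsRiccati a b M Q P₂)
    (hS : IsLyapunov a b (fun t => -(M t * P₁ t)) N S) {t : ℝ} (ht : t ∈ Icc a b) :
    HasDerivWithinAt (fun u => ((P₂ u - P₁ u) * S u).trace)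
      (((P₂ t - P₁ t) * M t * (P₂ t - P₁ t) * S t).trace + ((P₂ t - P₁ t) * N t).trace)
      (Icc a b) t := by
  refine (hasDerivWithinAt_trace (hasDerivWithinAt_matrix_mul
    ((hP₂.hasDerivWithinAt t ht).fun_sub (hP₁.hasDerivWithinAt t ht)) (hS t ht))).congr_deriv ?_
  have hcycle : ((P₂ t - P₁ t) * (S t * (P₁ t * M t))).trace =
      (P₁ t * M t * (P₂ t - P₁ t) * S t).trace := by
    rw [← Matrix.mul_assoc, trace_mul_comm, ← Matrix.mul_assoc]
  simp only [transpose_neg, transpose_mul, hP₁.transpose_eq t ht, hM.transpose_eq ht,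
    Matrix.mul_add, Matrix.mul_neg, trace_add, trace_neg, hcycle]
  simp only [Matrix.mul_sub, Matrix.sub_mul, Matrix.mul_neg, Matrix.neg_mul, Matrix.mul_assoc,
    trace_sub, trace_neg]
  ring

lemma dualCost_sub_eq (hab : a ≤ b) (hM : IsPosSemidefFamily M (Icc a b))
    (hN : ContinuousOn N (Icc a b)) (hP₁ : IsRiccati a b M Q P₁) (hP₂ : IsRiccati a b M Q P₂)
    (hS : IsLyapunov a b (fun t => -(M t * P₁ t)) N S) (S0 : Matrix ι ι ℝ) :
    dualCost a b N S0 (S b) P₂ - dualCost a b N S0 (S b) P₁ =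
      ((P₂ a - P₁ a) * (S a - S0)).trace +
        ∫ t in a..b, ((P₂ t - P₁ t) * M t * (P₂ t - P₁ t) * S t).trace := by
  have hΔ := hP₂.continuousOn.fun_sub hP₁.continuousOn
  have hquad := continuousOn_trace (continuousOn_matrix_mul (continuousOn_matrix_mul
    (continuousOn_matrix_mul hΔ hM.continuousOn) hΔ) hS.continuousOn)
  have hrun {R : ℝ → Matrix ι ι ℝ} (hR : ContinuousOn R (Icc a b)) :=
    continuousOn_trace (continuousOn_matrix_mul hR hN)
  have hint := integral_eq_sub_of_hasDerivWithinAt_Icc hab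
    (fun t ht => hasDerivWithinAt_trace_sub_mul hM hP₁ hP₂ hS ht) (hquad.add (hrun hΔ))
  rw [intervalIntegral.integral_add (hquad.intervalIntegrable_of_Icc hab)
    ((hrun hΔ).intervalIntegrable_of_Icc hab)] at hint
  simp only [Matrix.sub_mul _ _ (N _), trace_sub] at hint
  rw [intervalIntegral.integral_sub ((hrun hP₂.continuousOn).intervalIntegrable_of_Icc hab)
    ((hrun hP₁.continuousOn).intervalIntegrable_of_Icc hab)] at hint
  simp only [dualCost, Matrix.mul_sub _ (S a), Matrix.sub_mul _ _ (S _), Matrix.sub_mul _ _ S0,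
    trace_sub] at hint ⊢
  linarith

lemma IsRiccati.posSemidef_sub_mul_mul_sub (hM : IsPosSemidefFamily M (Icc a b))
    (hP₁ : IsRiccati a b M Q P₁) (hP₂ : IsRiccati a b M Q P₂) {t : ℝ} (ht : t ∈ Icc a b) :
    ((P₂ t - P₁ t) * M t * (P₂ t - P₁ t)).PosSemidef := by
  have hconj := posSemidef_mul_mul_transpose (hM.posSemidef t ht) (P₂ t - P₁ t)
  rwa [transpose_sub, hP₂.transpose_eq t ht, hP₁.transpose_eq t ht] at hconj

lemma IsRiccati.eqOn_of_sub_mul_eq_zero (hab : a < b) (hM : IsPosSemidefFamily M (Icc a b))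
    (hnd : TerminallyNondegenerate a b M) (hP₁ : IsRiccati a b M Q P₁)
    (hP₂ : IsRiccati a b M Q P₂) (h : ∀ t ∈ Icc a b, (P₂ t - P₁ t) * M t = 0) :
    EqOn P₁ P₂ (Icc a b) := by
  classical
  have hMΔ : ∀ t ∈ Icc a b, M t * (P₂ t - P₁ t) = 0 := fun t ht => by
    have htranspose := congrArg transpose (h t ht)
    rwa [transpose_mul, transpose_sub, hP₂.transpose_eq t ht, hP₁.transpose_eq t ht,
      hM.transpose_eq ht, transpose_zero] at htranspose
  have hconst : ∀ t ∈ Icc a b, P₂ t - P₁ t = P₂ a - P₁ a := fun t ht =>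
    eq_of_hasDerivWithinAt_Icc_zero (f := fun t => P₂ t - P₁ t)
      (fun u hu => ((hP₂.hasDerivWithinAt u hu).fun_sub (hP₁.hasDerivWithinAt u hu)).congr_deriv <|
        calc P₂ u * M u * P₂ u - Q u - (P₁ u * M u * P₁ u - Q u)
            = (P₂ u - P₁ u) * M u * P₂ u + P₁ u * (M u * (P₂ u - P₁ u)) := by noncomm_ring
          _ = 0 := by rw [h u hu, hMΔ u hu, zero_mul, mul_zero, add_zero]) ht
  have hzero : P₂ a - P₁ a = 0 := by
    refine ext_of_mulVec_single fun j => ?_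
    rw [zero_mulVec]
    refine hnd a ⟨le_rfl, hab⟩ _ fun t ht => ?_
    rw [mulVec_mulVec, ← hconst t ht, hMΔ t ht, zero_mulVec]
  exact fun t ht => (sub_eq_zero.1 ((hconst t ht).trans hzero)).symm

lemma IsRiccati.eqOn_of_isLyapunov (hab : a < b) (hM : IsPosSemidefFamily M (Icc a b))
    (hN : IsPosSemidefFamily N (Icc a b))
    (hnd : TerminallyNondegenerate a b M) (hP₁ : IsRiccati a b M Q P₁)
    (hP₂ : IsRiccati a b M Q P₂) (hS₁ : IsLyapunov a b (fun t => -(M t * P₁ t)) N S₁)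
    (hS₂ : IsLyapunov a b (fun t => -(M t * P₂ t)) N S₂) (hpos : (S₁ a).PosDef)
    (ha : S₁ a = S₂ a) (hb : S₁ b = S₂ b) : EqOn P₁ P₂ (Icc a b) := by
  classical
  have hS₁pos : ∀ t ∈ Icc a b, (S₁ t).PosDef := fun t ht =>
    hS₁.posDef (hM.continuousOn.mul hP₁.continuousOn).neg hN.posSemidef hpos ht
  have hS₂pos : ∀ t ∈ Icc a b, (S₂ t).PosDef := fun t ht =>
    hS₂.posDef (hM.continuousOn.mul hP₂.continuousOn).neg hN.posSemidef (ha ▸ hpos) ht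
  have hdual₁ := dualCost_sub_eq hab.le hM hN.continuousOn hP₁ hP₂ hS₁ (S₁ a)
  have hdual₂ := dualCost_sub_eq hab.le hM hN.continuousOn hP₂ hP₁ hS₂ (S₁ a)
  rw [← ha, ← hb] at hdual₂
  simp only [sub_self, mul_zero, trace_zero, zero_add] at hdual₁ hdual₂
  have hnonneg₁ : ∀ t ∈ Icc a b, 0 ≤ ((P₂ t - P₁ t) * M t * (P₂ t - P₁ t) * S₁ t).trace :=
    fun t ht => trace_mul_nonneg (hP₁.posSemidef_sub_mul_mul_sub hM hP₂ ht) (hS₁pos t ht).posSemidef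
  have hnonneg₂ : 0 ≤ ∫ t in a..b, ((P₁ t - P₂ t) * M t * (P₁ t - P₂ t) * S₂ t).trace :=
    intervalIntegral.integral_nonneg hab.le fun t ht =>
      trace_mul_nonneg (hP₂.posSemidef_sub_mul_mul_sub hM hP₁ ht) (hS₂pos t ht).posSemidef
  have hint : ∫ t in a..b, ((P₂ t - P₁ t) * M t * (P₂ t - P₁ t) * S₁ t).trace = 0 := by
    linarith [intervalIntegral.integral_nonneg hab.le hnonneg₁ (μ := MeasureTheory.volume)]
  have hcont := hP₂.continuousOn.fun_sub hP₁.continuousOn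
  refine hP₁.eqOn_of_sub_mul_eq_zero hab hM hnd hP₂ fun t ht =>
    mul_eq_zero_of_mul_mul_transpose_eq_zero (hM.posSemidef t ht) ?_
  rw [transpose_sub, hP₂.transpose_eq t ht, hP₁.transpose_eq t ht]
  exact eq_zero_of_trace_mul_posDef_eq_zero (hP₁.posSemidef_sub_mul_mul_sub hM hP₂ ht)
    (hS₁pos t ht)
    (eq_zero_of_integral_eq_zero hab (continuousOn_trace (((hcont.mul hM.continuousOn).mul
      hcont).mul hS₁.continuousOn)) hnonneg₁ hint ht)

lemma IsRiccati.hasDerivWithinAt_trace_mul {K X V : ℝ → Matrix ι ι ℝ} {t : ℝ}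
    (hM : IsPosSemidefFamily M (Icc a b)) (hP : IsRiccati a b M Q P) (ht : t ∈ Icc a b)
    (hX : HasDerivWithinAt X (M t * K t) (Icc a b) t) (hV : HasDerivWithinAt V (N t) (Icc a b) t) :
    HasDerivWithinAt (fun u => (P u * (X u * (X u)ᵀ + V u)).trace)
      ((P t * N t).trace + ((P t * X t + K t)ᵀ * M t * (P t * X t + K t)).trace +
        (P t * M t * P t * V t).trace -
        (((K t)ᵀ * M t * K t).trace + (Q t * (X t * (X t)ᵀ + V t)).trace)) (Icc a b) t := by
  refine (hasDerivWithinAt_trace (hasDerivWithinAt_matrix_mul (hP.hasDerivWithinAt t ht)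
    ((hasDerivWithinAt_matrix_mul hX (hasDerivWithinAt_transpose hX)).fun_add hV))).congr_deriv ?_
  have hquad : (P t * M t * P t * (X t * (X t)ᵀ)).trace =
      ((X t)ᵀ * P t * M t * (P t * X t)).trace := by
    rw [← Matrix.mul_assoc, trace_mul_comm]
    simp only [Matrix.mul_assoc]
  have hcross : (P t * (M t * K t * (X t)ᵀ)).trace = ((X t)ᵀ * P t * M t * K t).trace := by
    rw [← Matrix.mul_assoc, trace_mul_comm]
    simp only [Matrix.mul_assoc]
  have hcross' : (P t * (X t * ((K t)ᵀ * M t))).trace = ((K t)ᵀ * M t * (P t * X t)).trace := by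
    rw [← Matrix.mul_assoc, trace_mul_comm]
  simp only [transpose_add, transpose_mul, hP.transpose_eq t ht, hM.transpose_eq ht,
    Matrix.mul_add, Matrix.add_mul, Matrix.sub_mul, trace_add, trace_sub, hquad, hcross, hcross']
  ring

/-- Weak duality for the covariance `X Xᵀ + V`, where the open-loop control `K` drives `X` and the
noise feeds `V`: complete the square in `K`. -/
lemma IsRiccati.neg_integral_le_dualCost {K X V : ℝ → Matrix ι ι ℝ} (hab : a ≤ b)
    (hM : IsPosSemidefFamily M (Icc a b)) (hQ : ContinuousOn Q (Icc a b))
    (hN : IsPosSemidefFamily N (Icc a b)) (hK : ContinuousOn K (Icc a b))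
    (hX : ∀ t ∈ Icc a b, HasDerivWithinAt X (M t * K t) (Icc a b) t)
    (hV : ∀ t ∈ Icc a b, HasDerivWithinAt V (N t) (Icc a b) t) (hVa : (V a).PosSemidef)
    (hP : IsRiccati a b M Q P) :
    -∫ t in a..b, (((K t)ᵀ * M t * K t).trace + (Q t * (X t * (X t)ᵀ + V t)).trace) ≤
      dualCost a b N (X a * (X a)ᵀ + V a) (X b * (X b)ᵀ + V b) P := by
  let primalCost t := ((K t)ᵀ * M t * K t).trace + (Q t * (X t * (X t)ᵀ + V t)).trace
  have hXc : ContinuousOn X (Icc a b) := fun t ht => (hX t ht).continuousWithinAt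
  have hVc : ContinuousOn V (Icc a b) := fun t ht => (hV t ht).continuousWithinAt
  have hcostc : ContinuousOn primalCost (Icc a b) :=
    (continuousOn_trace (continuousOn_matrix_mul (continuousOn_matrix_mul
      (continuous_id.matrix_transpose.comp_continuousOn hK) hM.continuousOn) hK)).add
    (continuousOn_trace (continuousOn_matrix_mul hQ ((continuousOn_matrix_mul hXc
      (continuous_id.matrix_transpose.comp_continuousOn hXc)).add hVc)))
  have hrunc := continuousOn_trace (continuousOn_matrix_mul hP.continuousOn hN.continuousOn)
  have hVpsd : ∀ t ∈ Icc a b, (V t).PosSemidef := fun t ht => by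
    rw [← sub_add_cancel (V t) (V a)]
    exact (posSemidef_sub_of_hasDerivWithinAt hV hN.posSemidef le_rfl ht.1 ht.2).add hVa
  have hmono := le_of_hasDerivWithinAt_Icc_nonneg hab
    (fun t ht => ((hP.hasDerivWithinAt_trace_mul hM ht (hX t ht) (hV t ht)).fun_sub
      (hasDerivWithinAt_integral_Icc hrunc ht)).fun_add (hasDerivWithinAt_integral_Icc hcostc ht))
    (fun t ht => by
      have hsquare := (posSemidef_mul_mul_transpose (hM.posSemidef t ht)
        (P t * X t + K t)ᵀ).trace_nonneg
      have hnoise := posSemidef_mul_mul_transpose (hM.posSemidef t ht) (P t)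
      rw [hP.transpose_eq t ht] at hnoise
      rw [transpose_transpose] at hsquare
      linarith [trace_mul_nonneg hnoise (hVpsd t ht)])
  simp only [intervalIntegral.integral_same] at hmono
  rw [dualCost]
  linarith

lemma isUnit_integral_of_forall_mulVec_eq_zero [DecidableEq ι] (hab : a < b)
    (hM : IsPosSemidefFamily M (Icc a b))
    (h : ∀ v, (∀ t ∈ Icc a b, M t *ᵥ v = 0) → v = 0) : IsUnit (∫ t in a..b, M t) := by
  rw [← mulVec_injective_iff_isUnit]
  refine (injective_iff_map_eq_zero (mulVecLin (∫ s in a..b, M s))).2 fun v hv =>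
    h v fun t ht => ?_
  let energy := traceLinearMap ι ℝ ℝ ∘ₗ LinearMap.mulRight ℝ (vecMulVec v v)
  have henergy (X : Matrix ι ι ℝ) : energy X = v ⬝ᵥ X *ᵥ v := trace_mul_vecMulVec_self X v
  have hcont : ContinuousOn (fun t => energy (M t)) (Icc a b) :=
    (LinearMap.continuous_of_finiteDimensional energy).comp_continuousOn hM.continuousOn
  have hint : ∫ t in a..b, energy (M t) = 0 := by
    rw [integral_linearMap_comp energy hab.le hM.continuousOn, henergy]
    exact (congrArg (v ⬝ᵥ ·) hv).trans (dotProduct_zero v)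
  refine ((hM.posSemidef t ht).dotProduct_mulVec_zero_iff v).1 ?_
  rw [star_trivial, ← henergy]
  refine eq_zero_of_integral_eq_zero hab hcont (fun s hs => ?_) hint ht
  rw [henergy]
  simpa using (hM.posSemidef s hs).dotProduct_mulVec_nonneg v

lemma IsRiccati.dualCost_add_dualCost {τ : ℝ} (hτ : τ ∈ Icc a b) (hN : ContinuousOn N (Icc a b))
    (hP : IsRiccati a b M Q P) (S0 S1 T : Matrix ι ι ℝ) :
    dualCost a τ N S0 T P + dualCost τ b N T S1 P = dualCost a b N S0 S1 P := by
  have hrun := continuousOn_trace (continuousOn_matrix_mul hP.continuousOn hN)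
  rw [dualCost, dualCost, dualCost, ← intervalIntegral.integral_add_adjacent_intervals
    ((hrun.mono (Icc_subset_Icc_right hτ.2)).intervalIntegrable_of_Icc hτ.1)
    ((hrun.mono (Icc_subset_Icc_left hτ.1)).intervalIntegrable_of_Icc hτ.2)]
  ring

lemma exists_forall_le_dualCost_add_integral (hab : a ≤ b) (hM : IsPosSemidefFamily M (Icc a b))
    (hQ : ContinuousOn Q (Icc a b)) (hN : IsPosSemidefFamily N (Icc a b)) (hS0 : S0.PosSemidef) :
    ∃ c, ∀ P, IsRiccati a b M Q P → c ≤ dualCost a b N S0 (S0 + ∫ t in a..b, N t) P := by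
  have := FiniteDimensional.complete ℝ (Matrix ι ι ℝ)
  let V t := S0 + ∫ s in a..t, N s
  refine ⟨_, fun P hP => (hP.neg_integral_le_dualCost (K := 0) (X := fun _ => 0) (V := V) hab hM
    hQ hN continuousOn_const (fun t _ => ?_) (fun t ht =>
      (hasDerivWithinAt_integral_Icc hN.continuousOn ht).const_add S0) ?_).trans_eq ?_⟩
  · exact (hasDerivWithinAt_const t _ 0).congr_deriv (Matrix.mul_zero _).symm
  · simpa [V] using hS0
  · simp [V]

lemma exists_forall_le_dualCost_of_isUnit_integral [DecidableEq ι] (hab : a ≤ b)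
    (hM : IsPosSemidefFamily M (Icc a b)) (hQ : ContinuousOn Q (Icc a b))
    (hN : IsPosSemidefFamily N (Icc a b)) (hG : IsUnit (∫ t in a..b, M t)) (hS0 : S0.PosSemidef)
    (hS1 : (S1 - ∫ t in a..b, N t).PosSemidef) :
    ∃ c, ∀ P, IsRiccati a b M Q P → c ≤ dualCost a b N S0 S1 P := by
  have := FiniteDimensional.complete ℝ (Matrix ι ι ℝ)
  obtain ⟨X₀, hX₀⟩ := exists_mul_transpose_eq_of_posSemidef hS0
  obtain ⟨X₁, hX₁⟩ := exists_mul_transpose_eq_of_posSemidef hS1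
  let K := (∫ s in a..b, M s)⁻¹ * (X₁ - X₀)
  let X t := X₀ + (∫ s in a..t, M s) * K
  have hXa : X a = X₀ := by simp [X]
  have hXb : X b = X₁ := by
    simp only [X, K]
    rw [mul_nonsing_inv_cancel_left _ _ ((isUnit_iff_isUnit_det _).1 hG), add_sub_cancel]
  refine ⟨_, fun P hP => (hP.neg_integral_le_dualCost (K := fun _ => K) (X := X)
    (V := fun t => ∫ s in a..t, N s) hab hM hQ hN continuousOn_const (fun t ht =>
      ((hasDerivWithinAt_integral_Icc hM.continuousOn ht).mul_const K).const_add X₀)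
    (fun t ht => hasDerivWithinAt_integral_Icc hN.continuousOn ht) ?_).trans_eq ?_⟩
  · simpa using PosSemidef.zero
  · rw [hXa, hXb, hX₀, hX₁, intervalIntegral.integral_same, add_zero, sub_add_cancel]

lemma exists_posDef_sub_integral (hab : a < b) (hN : IsPosSemidefFamily N (Icc a b))
    (hS1 : S1.PosDef) : ∃ τ ∈ Ico a b, (S1 - ∫ t in τ..b, N t).PosDef := by
  have := FiniteDimensional.complete ℝ (Matrix ι ι ℝ)
  let tail τ := ∫ t in τ..b, N t
  have htail : ContinuousWithinAt tail (Icc a b) b := by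
    have hint := hN.continuousOn.integrableOn_Icc (μ := MeasureTheory.volume)
    rw [← uIcc_of_le hab.le] at hint ⊢
    exact intervalIntegral.continuousOn_primitive_interval_left hint b right_mem_uIcc
  have htendsto : Tendsto (fun τ => S1 - tail τ) (𝓝[<] b) (𝓝 S1) := by
    simpa [tail] using (htail.tendsto.mono_left
      (nhdsWithin_le_of_mem (Icc_mem_nhdsLT hab))).const_sub S1
  obtain ⟨τ, hsymm, hτ⟩ := ((htendsto.eventually (eventually_posDef_of_transpose_eq hS1)).and
    (Ico_mem_nhdsLT hab)).exists
  refine ⟨τ, hτ, hsymm ?_⟩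
  have hr := hN.mono (Icc_subset_Icc_left hτ.1)
  rw [transpose_sub, transpose_eq_of_posSemidef hS1.posSemidef,
    transpose_eq_of_posSemidef (posSemidef_integral hτ.2.le hr.continuousOn hr.posSemidef)]

/-- The covariance is left alone until a time `τ` close to `b`, and then steered to its target. -/
lemma exists_forall_le_dualCost (hab : a < b) (hM : IsPosSemidefFamily M (Icc a b))
    (hQ : ContinuousOn Q (Icc a b)) (hN : IsPosSemidefFamily N (Icc a b))
    (hnd : TerminallyNondegenerate a b M) (hS0 : S0.PosSemidef) (hS1 : S1.PosDef) :
    ∃ c, ∀ P, IsRiccati a b M Q P → c ≤ dualCost a b N S0 S1 P := by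
  classical
  have := FiniteDimensional.complete ℝ (Matrix ι ι ℝ)
  obtain ⟨τ, hτ, hposDef⟩ := exists_posDef_sub_integral hab hN hS1
  have hl : Icc a τ ⊆ Icc a b := Icc_subset_Icc_right hτ.2.le
  have hr : Icc τ b ⊆ Icc a b := Icc_subset_Icc_left hτ.1
  have hfree := posSemidef_integral hτ.1 (hN.mono hl).continuousOn (hN.mono hl).posSemidef
  obtain ⟨c₁, hc₁⟩ := exists_forall_le_dualCost_add_integral hτ.1 (hM.mono hl) (hQ.mono hl)
    (hN.mono hl) hS0
  obtain ⟨c₂, hc₂⟩ := exists_forall_le_dualCost_of_isUnit_integral hτ.2.le (hM.mono hr)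
    (hQ.mono hr) (hN.mono hr)
    (isUnit_integral_of_forall_mulVec_eq_zero hτ.2 (hM.mono hr) (hnd τ hτ))
    (hS0.add hfree) hposDef.posSemidef
  refine ⟨c₁ + c₂, fun P hP => ?_⟩
  rw [← hP.dualCost_add_dualCost (Ico_subset_Icc_self hτ) hN.continuousOn S0 S1]
  exact add_le_add (hc₁ P (hP.mono hl)) (hc₂ P (hP.mono hr))

lemma exists_forall_trace_add_trace_le (hab : a < b) (hM : IsPosSemidefFamily M (Icc a b))
    (hQ : ContinuousOn Q (Icc a b)) (hN : IsPosSemidefFamily N (Icc a b))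
    (hnd : TerminallyNondegenerate a b M) (hS0 : S0.PosDef) (hS1 : S1.PosDef)
    {E0 E1 : Matrix ι ι ℝ} (hE0 : E0ᵀ = E0) (hE1 : E1ᵀ = E1) (c : ℝ) :
    ∃ r, ∀ P, IsRiccati a b M Q P → dualCost a b N S0 S1 P ≤ c →
      (P a * E0).trace + (P b * E1).trace ≤ r := by
  obtain ⟨ε, ⟨hposDef0, hposDef1⟩, hε⟩ :
      ∃ ε : ℝ, ((S0 + ε • E0).PosDef ∧ (S1 - ε • E1).PosDef) ∧ 0 < ε := by
    have hpert1 := eventually_posDef_add_smul hS1 (E := -E1) (by rw [transpose_neg, hE1])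
    simp only [smul_neg, ← sub_eq_add_neg] at hpert1
    exact ((((eventually_posDef_add_smul hS0 hE0).and hpert1).filter_mono
      nhdsWithin_le_nhds).and self_mem_nhdsWithin).exists (f := 𝓝[>] 0)
  obtain ⟨d, hd⟩ := exists_forall_le_dualCost hab hM hQ hN hnd hposDef0.posSemidef hposDef1
  refine ⟨(c - d) / ε, fun P hP hPc => ?_⟩
  have hle := hd P hP
  rw [le_div_iff₀ hε]
  simp only [dualCost, Matrix.mul_add, Matrix.mul_sub, trace_add, trace_sub, Matrix.mul_smul,
    trace_smul, smul_eq_mul] at hle hPc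
  linarith

lemma dotProduct_integral_mulVec_nonneg (hab : a ≤ b) (hQ : IsPosSemidefFamily Q (Icc a b))
    (x : ι → ℝ) : 0 ≤ x ⬝ᵥ (∫ t in a..b, Q t) *ᵥ x := by
  simpa using
    (posSemidef_integral hab hQ.continuousOn hQ.posSemidef).dotProduct_mulVec_nonneg x

lemma IsRiccati.dotProduct_mulVec_le (hM : IsPosSemidefFamily M (Icc a b))
    (hQ : IsPosSemidefFamily Q (Icc a b)) (hP : IsRiccati a b M Q P) {s t : ℝ} (hs : a ≤ s)
    (hst : s ≤ t) (ht : t ≤ b) (x : ι → ℝ) :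
    x ⬝ᵥ P s *ᵥ x ≤ x ⬝ᵥ P t *ᵥ x + x ⬝ᵥ (∫ u in a..b, Q u) *ᵥ x := by
  have := FiniteDimensional.complete ℝ (Matrix ι ι ℝ)
  let V u := ∫ r in a..u, Q r
  have hincr : (P t + V t - (P s + V s)).PosSemidef :=
    posSemidef_sub_of_hasDerivWithinAt (fun u hu => ((hP.hasDerivWithinAt u hu).fun_add
      (hasDerivWithinAt_integral_Icc hQ.continuousOn hu)).congr_deriv (sub_add_cancel _ _))
      (fun u hu => by
        have hconj := posSemidef_mul_mul_transpose (hM.posSemidef u hu) (P u)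
        rwa [hP.transpose_eq u hu] at hconj) hs hst ht
  have hV : (V b - V t).PosSemidef :=
    posSemidef_sub_of_hasDerivWithinAt (fun u hu => hasDerivWithinAt_integral_Icc
      hQ.continuousOn hu) hQ.posSemidef (hs.trans hst) ht le_rfl
  have hVs := dotProduct_integral_mulVec_nonneg hs
    (hQ.mono (Icc_subset_Icc_right (hst.trans ht))) x
  have hincr' := hincr.dotProduct_mulVec_nonneg x
  have hV' := hV.dotProduct_mulVec_nonneg x
  simp only [star_trivial, sub_mulVec, add_mulVec, dotProduct_sub, dotProduct_add]
    at hincr' hV'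
  linarith

lemma IsRiccati.abs_dotProduct_mulVec_le (hM : IsPosSemidefFamily M (Icc a b))
    (hQ : IsPosSemidefFamily Q (Icc a b)) (hP : IsRiccati a b M Q P) {t : ℝ} (ht : t ∈ Icc a b)
    (x : ι → ℝ) :
    |x ⬝ᵥ P t *ᵥ x| ≤ |x ⬝ᵥ P a *ᵥ x| + |x ⬝ᵥ P b *ᵥ x| + x ⬝ᵥ (∫ s in a..b, Q s) *ᵥ x := by
  have hlower := hP.dotProduct_mulVec_le hM hQ le_rfl ht.1 ht.2 x
  have hupper := hP.dotProduct_mulVec_le hM hQ ht.1 ht.2 le_rfl x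
  rw [abs_le]
  constructor <;> linarith [neg_abs_le (x ⬝ᵥ P a *ᵥ x), le_abs_self (x ⬝ᵥ P b *ᵥ x),
    abs_nonneg (x ⬝ᵥ P a *ᵥ x), abs_nonneg (x ⬝ᵥ P b *ᵥ x)]

lemma exists_forall_norm_le_of_dualCost_le (hab : a < b) (hM : IsPosSemidefFamily M (Icc a b))
    (hQ : IsPosSemidefFamily Q (Icc a b)) (hN : IsPosSemidefFamily N (Icc a b))
    (hnd : TerminallyNondegenerate a b M) (hS0 : S0.PosDef) (hS1 : S1.PosDef) (c : ℝ) :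
    ∃ R, ∀ P, IsRiccati a b M Q P → dualCost a b N S0 S1 P ≤ c → ∀ t ∈ Icc a b, ‖P t‖ ≤ R := by
  classical
  have hsymm (x : ι → ℝ) := transpose_eq_of_posSemidef (posSemidef_vecMulVec_self x)
  have hnegsymm (x : ι → ℝ) : (-vecMulVec x x)ᵀ = -vecMulVec x x := by
    rw [transpose_neg, hsymm]
  have hlin {E0 E1 : Matrix ι ι ℝ} (hE0 : E0ᵀ = E0) (hE1 : E1ᵀ = E1) :=
    exists_forall_trace_add_trace_le hab hM hQ.continuousOn hN hnd hS0 hS1 hE0 hE1 c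
  choose ra hra using fun x => hlin (hsymm x) transpose_zero
  choose ra' hra' using fun x => hlin (hnegsymm x) transpose_zero
  choose rb hrb using fun x => hlin transpose_zero (hsymm x)
  choose rb' hrb' using fun x => hlin transpose_zero (hnegsymm x)
  simp only [Matrix.mul_zero, Matrix.mul_neg, trace_zero, trace_neg, add_zero, zero_add,
    trace_mul_vecMulVec_self] at hra hra' hrb hrb'
  obtain ⟨R, hR⟩ := exists_norm_le_of_abs_dotProduct_mulVec_le fun x : ι → ℝ =>
    max (ra x) (ra' x) + max (rb x) (rb' x) + x ⬝ᵥ (∫ s in a..b, Q s) *ᵥ x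
  refine ⟨R, fun P hP hPc t ht => hR _ (hP.transpose_eq t ht) fun x =>
    (hP.abs_dotProduct_mulVec_le hM hQ ht x).trans ?_⟩
  gcongr
  · exact max_le_max (hra x P hP hPc) (hra' x P hP hPc)
  · exact max_le_max (hrb x P hP hPc) (hrb' x P hP hPc)

/-- The right-hand side of the Riccati equation with the quadratic term truncated at radius `R`. It
is globally Lipschitz, and agrees with the original one on the ball of radius `R`. -/
noncomputable def truncRiccatiField (R : ℝ) (M Q : ℝ → Matrix ι ι ℝ) (t : ℝ) (X : Matrix ι ι ℝ) :
    Matrix ι ι ℝ :=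
  radialRetract R X * M t * radialRetract R X - Q t

variable {R : ℝ}

lemma exists_lipschitzWith_truncRiccatiField (hR : 0 < R) (hM : ContinuousOn M (Icc a b))
    (Q : ℝ → Matrix ι ι ℝ) : ∃ K, ∀ t ∈ Icc a b, LipschitzWith K (truncRiccatiField R M Q t) := by
  classical
  obtain ⟨m, hm⟩ := isCompact_Icc.exists_bound_of_continuousOn hM
  refine ⟨(4 * (R * m)).toNNReal, fun t ht => LipschitzWith.of_dist_le_mul fun X Y => ?_⟩
  have hm0 : 0 ≤ m := (norm_nonneg _).trans (hm t ht)
  set x := radialRetract R X with hx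
  set y := radialRetract R Y with hy
  have hxy : ‖x - y‖ ≤ 2 * ‖X - Y‖ := by
    simpa [dist_eq_norm] using (lipschitzWith_radialRetract hR).dist_le_mul X Y
  have hdiff : truncRiccatiField R M Q t X - truncRiccatiField R M Q t Y =
      (x - y) * M t * x + y * M t * (x - y) := by
    simp only [truncRiccatiField, ← hx, ← hy]
    noncomm_ring
  rw [dist_eq_norm, dist_eq_norm, Real.coe_toNNReal _ (by positivity), hdiff]
  calc ‖(x - y) * M t * x + y * M t * (x - y)‖
      ≤ ‖x - y‖ * ‖M t‖ * ‖x‖ + ‖y‖ * ‖M t‖ * ‖x - y‖ :=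
        norm_add_le_of_le norm_mul₃_le norm_mul₃_le
    _ ≤ 2 * ‖X - Y‖ * m * R + R * m * (2 * ‖X - Y‖) := by
        gcongr
        exacts [hm t ht, norm_radialRetract_le hR X, norm_radialRetract_le hR Y, hm t ht]
    _ = 4 * (R * m) * ‖X - Y‖ := by ring

lemma continuousOn_truncRiccatiField (hM : ContinuousOn M (Icc a b))
    (hQ : ContinuousOn Q (Icc a b)) (X : Matrix ι ι ℝ) :
    ContinuousOn (fun t => truncRiccatiField R M Q t X) (Icc a b) :=
  (continuousOn_matrix_mul (continuousOn_matrix_mul continuousOn_const hM) continuousOn_const).sub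
    hQ

lemma isIntegralCurveOn_truncRiccatiField_iff (hR : 0 < R) (hP : ∀ t ∈ Icc a b, ‖P t‖ ≤ R) :
    IsIntegralCurveOn P (truncRiccatiField R M Q) (Icc a b) ↔
      ∀ t ∈ Icc a b, HasDerivWithinAt P (P t * M t * P t - Q t) (Icc a b) t :=
  forall₂_congr fun t ht => by
    simp only [truncRiccatiField, radialRetract_of_norm_le hR (hP t ht)]
    exact Iff.rfl

lemma transpose_eq_of_isIntegralCurveOn_truncRiccatiField (hR : 0 < R)
    (hM : IsPosSemidefFamily M (Icc a b)) (hQ : IsPosSemidefFamily Q (Icc a b))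
    (hP : IsIntegralCurveOn P (truncRiccatiField R M Q) (Icc a b)) (hPa : (P a)ᵀ = P a) {t : ℝ}
    (ht : t ∈ Icc a b) : (P t)ᵀ = P t := by
  obtain ⟨K, hK⟩ := exists_lipschitzWith_truncRiccatiField hR hM.continuousOn Q
  have hretract (X : Matrix ι ι ℝ) : radialRetract R Xᵀ = (radialRetract R X)ᵀ := by
    rw [radialRetract, radialRetract, frobenius_norm_transpose, transpose_smul]
  refine eqOn_of_isIntegralCurveOn_Icc (x := fun u => (P u)ᵀ) hK (fun u hu => ?_) hP hPa ht
  refine (hasDerivWithinAt_transpose (hP u hu)).congr_deriv ?_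
  rw [truncRiccatiField, truncRiccatiField, hretract, transpose_sub, transpose_mul, transpose_mul,
    hM.transpose_eq hu, hQ.transpose_eq hu, Matrix.mul_assoc]

lemma IsRiccati.posDef_neg (hM : IsPosSemidefFamily M (Icc a b))
    (hQ : IsPosSemidefFamily Q (Icc a b)) (hP : IsRiccati a b M Q P) (hPa : (-P a).PosDef) {t : ℝ}
    (ht : t ∈ Icc a b) : (-P t).PosDef := by
  classical
  have hcont : ContinuousOn (fun t => (2⁻¹ : ℝ) • (P t * M t)) (Icc a b) :=
    (continuousOn_matrix_mul hP.continuousOn hM.continuousOn).fun_const_smul 2⁻¹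
  have hlyap : IsLyapunov a b (fun t => (2⁻¹ : ℝ) • (P t * M t)) Q fun t => -P t := fun t ht => by
    refine (hP.hasDerivWithinAt t ht).fun_neg.congr_deriv ?_
    have hhalf (X : Matrix ι ι ℝ) : (2⁻¹ : ℝ) • X + (2⁻¹ : ℝ) • X = X := by
      rw [← two_smul ℝ, smul_inv_smul₀ two_ne_zero]
    rw [transpose_smul, transpose_mul, hP.transpose_eq t ht, hM.transpose_eq ht, mul_neg, neg_mul,
      smul_mul_assoc, mul_smul_comm, ← mul_assoc, ← neg_add, hhalf, neg_sub']
    abel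
  exact hlyap.posDef hcont hQ.posSemidef hPa ht

/-- The solution starting at `-1` is global: it stays negative definite and is bounded below by
`-1 - ∫ Q`, whatever the truncation radius. -/
lemma exists_isRiccati (hab : a ≤ b) (hM : IsPosSemidefFamily M (Icc a b))
    (hQ : IsPosSemidefFamily Q (Icc a b)) : ∃ P, IsRiccati a b M Q P := by
  classical
  have := FiniteDimensional.complete ℝ (Matrix ι ι ℝ)
  obtain ⟨R', hR'⟩ := exists_norm_le_of_abs_dotProduct_mulVec_le fun x : ι → ℝ =>
    x ⬝ᵥ x + x ⬝ᵥ (∫ t in a..b, Q t) *ᵥ x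
  let R := max R' 1
  have hR : 0 < R := lt_max_of_lt_right one_pos
  obtain ⟨K, hK⟩ := exists_lipschitzWith_truncRiccatiField hR hM.continuousOn Q
  obtain ⟨P, hP, hPa⟩ := exists_isIntegralCurveOn hab hK
    (continuousOn_truncRiccatiField hM.continuousOn hQ.continuousOn) (-1)
  have hsymm : ∀ t ∈ Icc a b, (P t)ᵀ = P t := fun t ht =>
    transpose_eq_of_isIntegralCurveOn_truncRiccatiField hR hM hQ hP (by simp [hPa]) ht
  let s t := R / max R ‖P t‖
  have hs : ContinuousOn s (Icc a b) :=
    continuousOn_const.div (continuousOn_const.sup hP.continuousOn.norm)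
      fun t _ => (lt_max_of_lt_left hR).ne'
  have hM' : IsPosSemidefFamily (fun t => s t ^ 2 • M t) (Icc a b) :=
    ⟨(hs.pow 2).smul hM.continuousOn, fun t ht => (hM.posSemidef t ht).smul (sq_nonneg _)⟩
  have hRiccati : IsRiccati a b (fun t => s t ^ 2 • M t) Q P :=
    ⟨hsymm, fun t ht => (hP t ht).congr_deriv (by
      simp only [truncRiccatiField, radialRetract, smul_mul_assoc, mul_smul_comm, smul_smul, s,
        sq])⟩
  have hnorm : ∀ t ∈ Icc a b, ‖P t‖ ≤ R := fun t ht => by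
    refine (hR' _ (hsymm t ht) fun x => ?_).trans (le_max_left _ _)
    have hlower := hRiccati.dotProduct_mulVec_le hM' hQ le_rfl ht.1 ht.2 x
    have hupper := (hRiccati.posDef_neg hM' hQ (by
      simpa [hPa] using PosDef.one) ht).posSemidef.dotProduct_mulVec_nonneg x
    have hQx := dotProduct_integral_mulVec_nonneg hab hQ x
    have hx : 0 ≤ x ⬝ᵥ x := by simpa using dotProduct_star_self_nonneg x
    simp only [hPa, neg_mulVec, one_mulVec, dotProduct_neg, star_trivial] at hlower hupper
    exact abs_le.2 ⟨by linarith, by linarith⟩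
  exact ⟨P, hsymm, (isIntegralCurveOn_truncRiccatiField_iff hR hnorm).1 hP⟩

/-- A family of curves `φ G` on `[a, b]` with initial value `G`, uniformly Lipschitz in `G`, which
solve the driftless Riccati equation for all `G` in `A`. -/
structure IsRiccatiFlow (a b : ℝ) (M Q : ℝ → Matrix ι ι ℝ) (K : NNReal)
    (φ : Matrix ι ι ℝ → ℝ → Matrix ι ι ℝ) (A : Set (Matrix ι ι ℝ)) : Prop where
  initial : ∀ G, φ G a = G
  lipschitzWith : ∀ t ∈ Icc a b, LipschitzWith K fun G => φ G t
  isRiccati : ∀ G ∈ A, IsRiccati a b M Q (φ G)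

variable {K : NNReal} {φ : Matrix ι ι ℝ → ℝ → Matrix ι ι ℝ}

lemma exists_isRiccatiFlow (hab : a ≤ b) (hM : IsPosSemidefFamily M (Icc a b))
    (hQ : IsPosSemidefFamily Q (Icc a b)) (hR : 0 < R) :
    ∃ K φ, IsRiccatiFlow a b M Q K φ {G | Gᵀ = G ∧ ∀ t ∈ Icc a b, ‖φ G t‖ ≤ R} ∧
      ∀ P, IsRiccati a b M Q P → (∀ t ∈ Icc a b, ‖P t‖ ≤ R) → EqOn (φ (P a)) P (Icc a b) := by
  have := FiniteDimensional.complete ℝ (Matrix ι ι ℝ)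
  obtain ⟨L, hL⟩ := exists_lipschitzWith_truncRiccatiField hR hM.continuousOn Q
  obtain ⟨K, φ, hφ, hK⟩ := exists_lipschitzWith_flow hab hL
    (continuousOn_truncRiccatiField hM.continuousOn hQ.continuousOn)
  refine ⟨K, φ, ⟨fun G => (hφ G).2, hK, fun G hG => ⟨fun t ht => ?_, ?_⟩⟩, fun P hP hnorm => ?_⟩
  · exact transpose_eq_of_isIntegralCurveOn_truncRiccatiField hR hM hQ (hφ G).1
      (by rw [(hφ G).2, hG.1]) ht
  · exact (isIntegralCurveOn_truncRiccatiField_iff hR hG.2).1 (hφ G).1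
  · exact eqOn_of_isIntegralCurveOn_Icc hL (hφ _).1
      ((isIntegralCurveOn_truncRiccatiField_iff hR hnorm).2 hP.hasDerivWithinAt) (hφ _).2

lemma isCompact_setOf_forall_norm_flow_le (hab : a ≤ b)
    (hK : ∀ t ∈ Icc a b, LipschitzWith K fun G => φ G t) (hφa : ∀ G, φ G a = G) (R : ℝ) :
    IsCompact {G | Gᵀ = G ∧ ∀ t ∈ Icc a b, ‖φ G t‖ ≤ R} := by
  have := FiniteDimensional.proper ℝ (Matrix ι ι ℝ)
  refine Metric.isCompact_of_isClosed_isBounded ?_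
    ((Metric.isBounded_closedBall (x := 0) (r := R)).subset fun G hG => ?_)
  · simp only [ofPred_and, ofPred_forall]
    exact (isClosed_eq continuous_id.matrix_transpose continuous_id).inter <|
      isClosed_iInter fun t => isClosed_iInter fun ht =>
        isClosed_le (hK t ht).continuous.norm continuous_const
  · simpa [hφa] using hG.2 a (left_mem_Icc.2 hab)

lemma eventually_forall_norm_flow_add_smul_le
    (hK : ∀ t ∈ Icc a b, LipschitzWith K fun G => φ G t) {r : ℝ} (hr : r < R)
    {G E : Matrix ι ι ℝ} (hG : G ∈ {G | Gᵀ = G ∧ ∀ t ∈ Icc a b, ‖φ G t‖ ≤ r}) (hE : Eᵀ = E) :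
    ∀ᶠ ε in 𝓝 (0 : ℝ), G + ε • E ∈ {G | Gᵀ = G ∧ ∀ t ∈ Icc a b, ‖φ G t‖ ≤ R} := by
  have hlim : Tendsto (fun ε : ℝ => K * ‖ε • E‖) (𝓝 0) (𝓝 0) :=
    Continuous.tendsto' (by fun_prop) _ _ (by rw [zero_smul, norm_zero, mul_zero])
  filter_upwards [hlim.eventually_lt_const (sub_pos.2 hr)] with ε hε
  refine ⟨by rw [transpose_add, transpose_smul, hG.1, hE], fun t ht => ?_⟩
  have hdist := (hK t ht).dist_le_mul (G + ε • E) G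
  rw [dist_eq_norm, dist_eq_norm, add_sub_cancel_left] at hdist
  linarith [norm_le_norm_add_norm_sub' (φ (G + ε • E) t) (φ G t), hG.2 t ht]

namespace IsRiccatiFlow

variable {A : Set (Matrix ι ι ℝ)} {G : Matrix ι ι ℝ}

/-- The first variation of the dual cost is the defect of the initial covariance. -/
lemma hasFDerivWithinAt_dualCost (hφ : IsRiccatiFlow a b M Q K φ A) (hab : a ≤ b)
    (hM : IsPosSemidefFamily M (Icc a b)) (hN : ContinuousOn N (Icc a b)) (hG : G ∈ A)
    (hS : IsLyapunov a b (fun t => -(M t * φ G t)) N S) (S0 : Matrix ι ι ℝ) :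
    HasFDerivWithinAt (fun H => dualCost a b N S0 (S b) (φ H))
      (traceLinearMap ι ℝ ℝ ∘ₗ LinearMap.mulRight ℝ (S a - S0)).toContinuousLinearMap A G := by
  classical
  obtain ⟨c, hc, htrace⟩ := exists_abs_trace_mul_le ι
  obtain ⟨m, hm⟩ := isCompact_Icc.exists_bound_of_continuousOn hM.continuousOn
  obtain ⟨σ, hσ⟩ := isCompact_Icc.exists_bound_of_continuousOn hS.continuousOn
  have hquad : ∀ H, ∀ t ∈ Icc a b, ‖((φ H t - φ G t) * M t * (φ H t - φ G t) * S t).trace‖ ≤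
      c * K ^ 2 * m * σ * ‖H - G‖ ^ 2 := fun H t ht => by
    have hm0 : 0 ≤ m := (norm_nonneg _).trans (hm t ht)
    have hlip : ‖φ H t - φ G t‖ ≤ K * ‖H - G‖ := by
      simpa only [dist_eq_norm] using (hφ.lipschitzWith t ht).dist_le_mul H G
    calc _ ≤ c * (‖(φ H t - φ G t) * M t * (φ H t - φ G t)‖ * ‖S t‖) := htrace _ _
      _ ≤ c * (‖φ H t - φ G t‖ * ‖M t‖ * ‖φ H t - φ G t‖ * ‖S t‖) := by
        gcongr
        exact norm_mul₃_le
      _ ≤ c * (K * ‖H - G‖ * m * (K * ‖H - G‖) * σ) := by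
        gcongr
        exacts [hm t ht, hσ t ht]
      _ = c * K ^ 2 * m * σ * ‖H - G‖ ^ 2 := by ring
  refine .of_isLittleO (Asymptotics.IsBigO.trans_isLittleO
    (.of_bound (c * K ^ 2 * m * σ * |b - a|) (eventually_mem_nhdsWithin.mono fun H hH => ?_))
    ((Asymptotics.isLittleO_pow_sub_sub G one_lt_two).mono nhdsWithin_le_nhds))
  have hdual := dualCost_sub_eq hab hM hN (hφ.isRiccati G hG) (hφ.isRiccati H hH) hS S0
  have hint := intervalIntegral.norm_integral_le_of_norm_le_const (a := a) (b := b) fun t ht =>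
    hquad H t (Ioc_subset_Icc_self (uIoc_of_le hab ▸ ht))
  rw [hφ.initial, hφ.initial] at hdual
  change ‖_ - _ - ((H - G) * (S a - S0)).trace‖ ≤ _
  rw [hdual, add_sub_cancel_left, norm_pow, norm_norm]
  linarith

lemma exists_isLyapunov (hφ : IsRiccatiFlow a b M Q K φ A) (hab : a ≤ b)
    (hM : IsPosSemidefFamily M (Icc a b)) (hN : IsPosSemidefFamily N (Icc a b)) (hG : G ∈ A)
    (hS1 : S1ᵀ = S1) : ∃ S, IsLyapunov a b (fun t => -(M t * φ G t)) N S ∧ (S a)ᵀ = S a ∧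
      S b = S1 := by
  have hdrift : ContinuousOn (fun t => -(M t * φ G t)) (Icc a b) :=
    (continuousOn_matrix_mul hM.continuousOn (hφ.isRiccati G hG).continuousOn).fun_neg
  obtain ⟨S, hS, rfl⟩ := _root_.exists_isLyapunov hab hdrift hN.continuousOn S1
  exact ⟨S, hS, hS.transpose_eq hdrift (fun t => hN.transpose_eq) (right_mem_Icc.2 hab) hS1
    (left_mem_Icc.2 hab), rfl⟩

lemma continuousOn_dualCost (hφ : IsRiccatiFlow a b M Q K φ A) (hab : a ≤ b)
    (hM : IsPosSemidefFamily M (Icc a b)) (hN : IsPosSemidefFamily N (Icc a b))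
    (S0 : Matrix ι ι ℝ) (hS1 : S1ᵀ = S1) :
    ContinuousOn (fun G => dualCost a b N S0 S1 (φ G)) A := fun G hG => by
  obtain ⟨S, hS, -, rfl⟩ := hφ.exists_isLyapunov hab hM hN hG hS1
  exact (hφ.hasFDerivWithinAt_dualCost hab hM hN.continuousOn hG hS S0).continuousWithinAt

lemma eq_of_isMinOn_dualCost (hφ : IsRiccatiFlow a b M Q K φ A) (hab : a ≤ b)
    (hM : IsPosSemidefFamily M (Icc a b)) (hN : ContinuousOn N (Icc a b)) (hG : G ∈ A)
    (hS : IsLyapunov a b (fun t => -(M t * φ G t)) N S)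
    (hmin : IsMinOn (fun H => dualCost a b N S0 (S b) (φ H)) A G)
    (hdefect : (S a - S0)ᵀ = S a - S0) (hmem : ∀ᶠ ε in 𝓝 (0 : ℝ), G + ε • (S a - S0) ∈ A) :
    S a = S0 := by
  have hline : HasDerivAt (fun ε : ℝ => G + ε • (S a - S0)) (S a - S0) 0 :=
    (((hasDerivAt_id (0 : ℝ)).smul_const (S a - S0)).const_add G).congr_deriv (one_smul ℝ _)
  have hderiv := (hφ.hasFDerivWithinAt_dualCost hab hM hN hG hS S0).comp_hasDerivAt_of_eq 0 hline
    hmem (by rw [zero_smul, add_zero])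
  have hlocal : IsLocalMin ((fun H => dualCost a b N S0 (S b) (φ H)) ∘
      fun ε : ℝ => G + ε • (S a - S0)) 0 := by
    filter_upwards [hmem] with ε hε
    simpa using hmin hε
  have hzero : ((S a - S0) * (S a - S0)ᵀ).trace = 0 := by
    rw [hdefect]
    exact hlocal.hasDerivAt_eq_zero hderiv
  rw [← conjTranspose_eq_transpose_of_trivial, trace_mul_conjTranspose_self_eq_zero_iff,
    sub_eq_zero] at hzero
  exact hzero

end IsRiccatiFlow

lemma dualCost_congr (hab : a ≤ b) (h : EqOn P₁ P₂ (Icc a b)) :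
    dualCost a b N S0 S1 P₁ = dualCost a b N S0 S1 P₂ := by
  have hint : ∫ t in a..b, (P₁ t * N t).trace = ∫ t in a..b, (P₂ t * N t).trace :=
    intervalIntegral.integral_congr fun t ht => by simp only [h (uIcc_of_le hab ▸ ht)]
  rw [dualCost, dualCost, h (left_mem_Icc.2 hab), h (right_mem_Icc.2 hab), hint]

lemma exists_isRiccati_isLyapunov (hab : a < b) (hM : IsPosSemidefFamily M (Icc a b))
    (hQ : IsPosSemidefFamily Q (Icc a b)) (hN : IsPosSemidefFamily N (Icc a b))
    (hnd : TerminallyNondegenerate a b M) (hS0 : S0.PosDef) (hS1 : S1.PosDef) :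
    ∃ P S, IsRiccati a b M Q P ∧ IsLyapunov a b (fun t => -(M t * P t)) N S ∧
      S a = S0 ∧ S b = S1 := by
  have ha : a ∈ Icc a b := left_mem_Icc.2 hab.le
  have hS1symm : S1ᵀ = S1 := transpose_eq_of_posSemidef hS1.posSemidef
  obtain ⟨P₀, hP₀⟩ := exists_isRiccati hab.le hM hQ
  obtain ⟨r, hr⟩ := exists_forall_norm_le_of_dualCost_le hab hM hQ hN hnd hS0 hS1
    (dualCost a b N S0 S1 P₀)
  have hP₀r : ∀ t ∈ Icc a b, ‖P₀ t‖ ≤ r := hr P₀ hP₀ le_rfl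
  have hP₀R : ∀ t ∈ Icc a b, ‖P₀ t‖ ≤ r + 1 := fun t ht => (hP₀r t ht).trans (lt_add_one r).le
  have hr0 : 0 ≤ r := (norm_nonneg _).trans (hP₀r a ha)
  obtain ⟨K, φ, hφ, huniq⟩ := exists_isRiccatiFlow hab.le hM hQ (R := r + 1) (by positivity)
  have hφP₀ : EqOn (φ (P₀ a)) P₀ (Icc a b) := huniq P₀ hP₀ hP₀R
  have hP₀mem : P₀ a ∈ {G | Gᵀ = G ∧ ∀ t ∈ Icc a b, ‖φ G t‖ ≤ r + 1} :=
    ⟨hP₀.transpose_eq a ha, fun t ht => by simpa only [hφP₀ ht] using hP₀R t ht⟩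
  obtain ⟨G, hG, hmin⟩ := (isCompact_setOf_forall_norm_flow_le hab.le hφ.lipschitzWith hφ.initial
    _).exists_isMinOn ⟨P₀ a, hP₀mem⟩ (hφ.continuousOn_dualCost hab.le hM hN S0 hS1symm)
  have hnorm : ∀ t ∈ Icc a b, ‖φ G t‖ ≤ r :=
    hr _ (hφ.isRiccati G hG) ((hmin hP₀mem).trans_eq (dualCost_congr hab.le hφP₀))
  obtain ⟨S, hS, hSa, rfl⟩ := hφ.exists_isLyapunov hab.le hM hN hG hS1symm
  have hdefect : (S a - S0)ᵀ = S a - S0 := by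
    rw [transpose_sub, transpose_eq_of_posSemidef hS0.posSemidef, hSa]
  exact ⟨φ G, S, hφ.isRiccati G hG, hS, hφ.eq_of_isMinOn_dualCost hab.le hM hN.continuousOn hG hS
    hmin hdefect (eventually_forall_norm_flow_add_smul_le hφ.lipschitzWith
      (lt_add_one r) ⟨hG.1, hnorm⟩ hdefect), rfl⟩

end DriftlessSystem

section Controllability

open Set Filter
open scoped Topology

attribute [local instance] Matrix.frobeniusNormedAddCommGroup Matrix.frobeniusNormedSpace
  Matrix.frobeniusNormedRing Matrix.frobeniusNormedAlgebra

variable {n p : ℕ} {A Φ W : ℝ → Matrix (Fin n) (Fin n) ℝ} {B : ℝ → Matrix (Fin n) (Fin p) ℝ}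
  {Γ : ℕ → ℝ → Matrix (Fin n) (Fin p) ℝ} {a b : ℝ}

lemma vecMul_injective_of_rank_eq_card {K m κ : Type*} [Field K] [Fintype m] [Fintype κ]
    {X : Matrix m κ K} (hX : X.rank = Fintype.card m) : Function.Injective X.vecMul := by
  rw [vecMul_injective_iff, linearIndependent_iff_card_eq_finrank_span, Set.finrank,
    ← rank_eq_finrank_span_row, hX]

lemma IsFundamentalPair.hasDerivWithinAt_inv_mul_ctrbMatSeq (hΦ : IsFundamentalPair a b A Φ W)
    (hΓ : IsCtrbMatSeq A B Γ) {k : ℕ} (hk : k < n) {t : ℝ} (ht : t ∈ Icc a b) :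
    HasDerivWithinAt (fun u => W u * Γ k u) (W t * Γ (k + 1) t) (Icc a b) t := by
  refine (hasDerivWithinAt_matrix_mul (hΦ.hasDerivWithinAt_inv t ht)
    (hasDerivWithinAt_matrix_iff.2 fun i j => (hΓ.2 k hk t i j).hasDerivWithinAt)).congr_deriv ?_
  rw [Matrix.mul_add, Matrix.neg_mul, Matrix.mul_assoc]
  abel

lemma IsFundamentalPair.vecMul_inv_mul_ctrbMatSeq_eq_zero (hΦ : IsFundamentalPair a b A Φ W)
    (hΓ : IsCtrbMatSeq A B Γ) {s : Set ℝ} (hs : IsOpen s) (hsub : s ⊆ Icc a b) {v : Fin n → ℝ}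
    (hv : ∀ t ∈ s, v ᵥ* (W t * B t) = 0) {k : ℕ} (hk : k ≤ n) :
    ∀ t ∈ s, v ᵥ* (W t * Γ k t) = 0 := by
  induction k with
  | zero => rwa [hΓ.1]
  | succ k ih =>
    intro t ht
    have hderiv : HasDerivWithinAt (fun u => v ᵥ* (W u * Γ k u)) (v ᵥ* (W t * Γ (k + 1) t)) s t :=
      hasDerivWithinAt_linearMap_comp (vecMulBilin ℝ ℝ v)
        ((hΦ.hasDerivWithinAt_inv_mul_ctrbMatSeq hΓ hk (hsub ht)).mono hsub)
    have hconst : HasDerivWithinAt (fun u => v ᵥ* (W u * Γ k u)) 0 s t :=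
      (hasDerivWithinAt_const t s 0).congr (ih (Nat.le_of_succ_le hk))
        (ih (Nat.le_of_succ_le hk) t ht)
    exact (hs.uniqueDiffOn t ht).eq_deriv _ hderiv hconst

lemma IsFundamentalPair.terminallyNondegenerate (hΦ : IsFundamentalPair a b A Φ W)
    (hΓ : IsCtrbMatSeq A B Γ) (hrank : ∃ᶠ t in 𝓝[<] b, (ctrbMat Γ t).rank = n) :
    TerminallyNondegenerate a b fun t => W t * (B t * (B t)ᵀ) * (W t)ᵀ := by
  intro τ hτ v hv
  have hsub : Ioo τ b ⊆ Icc a b := fun t ht => ⟨hτ.1.trans ht.1.le, ht.2.le⟩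
  have hvB : ∀ t ∈ Ioo τ b, v ᵥ* (W t * B t) = 0 := fun t ht => by
    have hgram : W t * (B t * (B t)ᵀ) * (W t)ᵀ = (W t * B t) * (W t * B t)ᴴ := by
      simp only [conjTranspose_eq_transpose_of_trivial, transpose_mul, Matrix.mul_assoc]
    rw [← mulVec_transpose, ← conjTranspose_eq_transpose_of_trivial,
      ← self_mul_conjTranspose_mulVec_eq_zero, ← hgram]
    exact hv t (Ioo_subset_Icc_self ht)
  obtain ⟨t, ht, htrank⟩ := (nhdsLT_basis b).frequently_iff.1 hrank τ hτ.2
  have hctrb : (v ᵥ* W t) ᵥ* ctrbMat Γ t = 0 := by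
    ext ⟨k, j⟩
    have hk := hΦ.vecMul_inv_mul_ctrbMatSeq_eq_zero hΓ isOpen_Ioo hsub hvB k.2.le t ht
    rw [← vecMul_vecMul] at hk
    exact congrFun hk j
  have hW : v ᵥ* W t = 0 := vecMul_injective_of_rank_eq_card (by simpa using htrank)
    (hctrb.trans (zero_vecMul _).symm)
  simpa [vecMul_vecMul, hΦ.inv_mul t (hsub ht)] using congrArg (· ᵥ* Φ t) hW

lemma TotallyControllable.frequently_rank_eq (hΓ : TotallyControllable Γ) :
    ∃ᶠ t in 𝓝[<] (1 : ℝ), (ctrbMat Γ t).rank = n :=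
  (nhdsLT_basis 1).frequently_iff.2 fun τ hτ => by
    obtain ⟨t, ht, hrank⟩ := hΓ (max τ 0) 1 (le_max_right _ _) (max_lt hτ one_pos) le_rfl
    exact ⟨t, ⟨(le_max_left _ _).trans_lt ht.1, ht.2⟩, hrank⟩

end Controllability

section MovingFrame

open Set

attribute [local instance] Matrix.frobeniusNormedAddCommGroup Matrix.frobeniusNormedSpace
  Matrix.frobeniusNormedRing Matrix.frobeniusNormedAlgebra

variable {ι : Type*} [Fintype ι] [DecidableEq ι] {a b : ℝ} {L M N P Q S Φ W : ℝ → Matrix ι ι ℝ}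

namespace IsFundamentalPair

lemma transpose_mul_mul_isSymm_iff (hΦ : IsFundamentalPair a b L Φ W) {t : ℝ} (ht : t ∈ Icc a b)
    {X : Matrix ι ι ℝ} : ((Φ t)ᵀ * X * Φ t)ᵀ = (Φ t)ᵀ * X * Φ t ↔ Xᵀ = X := by
  have hcancel := hΦ.adjoint.mul_conj_mul ht
  simp only [transpose_transpose] at hcancel
  rw [transpose_mul, transpose_mul, transpose_transpose, ← mul_assoc]
  exact ⟨fun h => by rw [← hcancel Xᵀ, h, hcancel], fun h => by rw [h]⟩

lemma hasDerivWithinAt_riccati_conj_iff (hΦ : IsFundamentalPair a b L Φ W) {t : ℝ}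
    (ht : t ∈ Icc a b) :
    HasDerivWithinAt (fun u => (Φ u)ᵀ * P u * Φ u)
        ((Φ t)ᵀ * P t * Φ t * (W t * M t * (W t)ᵀ) * ((Φ t)ᵀ * P t * Φ t) - (Φ t)ᵀ * Q t * Φ t)
        (Icc a b) t ↔
      HasDerivWithinAt P (-(L t)ᵀ * P t - P t * L t + P t * M t * P t - Q t) (Icc a b) t := by
  have htransform : (Φ t)ᵀ * P t * Φ t * (W t * M t * (W t)ᵀ) * ((Φ t)ᵀ * P t * Φ t) -
      (Φ t)ᵀ * Q t * Φ t = (Φ t)ᵀ * (P t * M t * P t - Q t) * Φ t := calc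
    _ = (Φ t)ᵀ * P t * (Φ t * (W t * M t * (W t)ᵀ) * (Φ t)ᵀ) * P t * Φ t -
        (Φ t)ᵀ * Q t * Φ t := by simp only [mul_assoc]
    _ = _ := by rw [hΦ.mul_conj_mul ht]; noncomm_ring
  have hiff := hΦ.adjoint.hasDerivWithinAt_conj_inv_iff (S := P) (X := P t * M t * P t - Q t) ht
  simp only [transpose_transpose, transpose_neg] at hiff
  rw [htransform, hiff, mul_neg, ← sub_eq_add_neg, ← add_sub_assoc]

lemma isRiccati_conj_iff (hΦ : IsFundamentalPair a b L Φ W) :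
    IsRiccati a b (fun t => W t * M t * (W t)ᵀ) (fun t => (Φ t)ᵀ * Q t * Φ t)
        (fun t => (Φ t)ᵀ * P t * Φ t) ↔
      (∀ t ∈ Icc a b, (P t)ᵀ = P t) ∧ ∀ t ∈ Icc a b, HasDerivWithinAt P
        (-(L t)ᵀ * P t - P t * L t + P t * M t * P t - Q t) (Icc a b) t :=
  ⟨fun h => ⟨fun t ht => (hΦ.transpose_mul_mul_isSymm_iff ht).1 (h.transpose_eq t ht),
    fun t ht => (hΦ.hasDerivWithinAt_riccati_conj_iff ht).1 (h.hasDerivWithinAt t ht)⟩,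
  fun h => ⟨fun t ht => (hΦ.transpose_mul_mul_isSymm_iff ht).2 (h.1 t ht),
    fun t ht => (hΦ.hasDerivWithinAt_riccati_conj_iff ht).2 (h.2 t ht)⟩⟩

lemma isLyapunov_conj_iff (hΦ : IsFundamentalPair a b L Φ W) :
    IsLyapunov a b (fun t => -(W t * M t * (W t)ᵀ * ((Φ t)ᵀ * P t * Φ t)))
        (fun t => W t * N t * (W t)ᵀ) (fun t => W t * S t * (W t)ᵀ) ↔
      IsLyapunov a b (fun t => L t - M t * P t) N S := by
  refine forall₂_congr fun t ht => ?_
  have hdrift : W t * M t * (W t)ᵀ * ((Φ t)ᵀ * P t * Φ t) = W t * (M t * P t) * Φ t := calc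
    _ = W t * M t * ((W t)ᵀ * (Φ t)ᵀ) * P t * Φ t := by simp only [mul_assoc]
    _ = _ := by rw [hΦ.adjoint.mul_inv ht, mul_one, mul_assoc (W t)]
  have htransform (K : Matrix ι ι ℝ) : -(W t * K * Φ t) * (W t * S t * (W t)ᵀ) +
      W t * S t * (W t)ᵀ * (-(W t * K * Φ t))ᵀ + W t * N t * (W t)ᵀ =
      W t * (-(K * S t) - S t * Kᵀ + N t) * (W t)ᵀ := calc
    _ = -(W t * K * (Φ t * W t) * S t * (W t)ᵀ) -
        W t * S t * ((W t)ᵀ * (Φ t)ᵀ) * Kᵀ * (W t)ᵀ + W t * N t * (W t)ᵀ := by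
      simp only [transpose_neg, transpose_mul]
      noncomm_ring
    _ = _ := by
      rw [hΦ.mul_inv ht, hΦ.adjoint.mul_inv ht]
      noncomm_ring
  beta_reduce
  rw [hdrift, htransform, hΦ.hasDerivWithinAt_conj_inv_iff ht]
  refine iff_of_eq (congrArg (HasDerivWithinAt S · (Icc a b) t) ?_)
  rw [transpose_sub]
  noncomm_ring

end IsFundamentalPair

end MovingFrame

section CoupledSystem

open Set Filter
open scoped Topology

attribute [local instance] Matrix.frobeniusNormedAddCommGroup Matrix.frobeniusNormedSpace
  Matrix.frobeniusNormedRing Matrix.frobeniusNormedAlgebra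

variable {n p q : ℕ} {A Q Φ W : ℝ → Matrix (Fin n) (Fin n) ℝ}
  {B : ℝ → Matrix (Fin n) (Fin p) ℝ} {C : ℝ → Matrix (Fin n) (Fin q) ℝ}
  {D : ℝ → Matrix (Fin q) (Fin q) ℝ} {Sig0 Sig1 : Matrix (Fin n) (Fin n) ℝ}
  {P S P₁ S₁ P₂ S₂ : ℝ → Matrix (Fin n) (Fin n) ℝ}

namespace IsFundamentalPair

lemma isCoupledSol_iff (hΦ : IsFundamentalPair 0 1 A Φ W) :
    IsCoupledSol A Q B C D Sig0 Sig1 P S ↔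
      IsRiccati 0 1 (fun t => W t * (B t * (B t)ᵀ) * (W t)ᵀ) (fun t => (Φ t)ᵀ * Q t * Φ t)
          (fun t => (Φ t)ᵀ * P t * Φ t) ∧
        IsLyapunov 0 1 (fun t => -(W t * (B t * (B t)ᵀ) * (W t)ᵀ * ((Φ t)ᵀ * P t * Φ t)))
          (fun t => W t * (C t * D t * (C t)ᵀ) * (W t)ᵀ) (fun t => W t * S t * (W t)ᵀ) ∧
        S 0 = Sig0 ∧ S 1 = Sig1 := by
  rw [hΦ.isRiccati_conj_iff (M := fun t => B t * (B t)ᵀ),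
    hΦ.isLyapunov_conj_iff (M := fun t => B t * (B t)ᵀ) (N := fun t => C t * D t * (C t)ᵀ)]
  simp only [IsCoupledSol, IsLyapunov, hasDerivWithinAt_matrix_iff, and_assoc]

lemma isPosSemidefFamily_transpose_conj (hΦ : IsFundamentalPair 0 1 A Φ W)
    (hQ : IsPosSemidefFamily Q (Icc 0 1)) :
    IsPosSemidefFamily (fun t => (Φ t)ᵀ * Q t * Φ t) (Icc 0 1) := by
  simpa only [transpose_transpose] using hQ.conj hΦ.adjoint.continuousOn_inv

lemma exists_isCoupledSol (hΦ : IsFundamentalPair 0 1 A Φ W)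
    (hnd : TerminallyNondegenerate 0 1 fun t => W t * (B t * (B t)ᵀ) * (W t)ᵀ)
    (hB : ContinuousOn B (Icc 0 1)) (hC : ContinuousOn C (Icc 0 1))
    (hQ : IsPosSemidefFamily Q (Icc 0 1)) (hD : IsPosSemidefFamily D (Icc 0 1))
    (hSig0 : Sig0.PosDef) (hSig1 : Sig1.PosDef) :
    ∃ P S, IsCoupledSol A Q B C D Sig0 Sig1 P S := by
  have h0 : (0 : ℝ) ∈ Icc 0 1 := unitInterval.zero_mem
  have h1 : (1 : ℝ) ∈ Icc 0 1 := unitInterval.one_mem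
  obtain ⟨P, S, hP, hS, hS0, hS1⟩ := exists_isRiccati_isLyapunov one_pos
    ((isPosSemidefFamily_mul_transpose hB).conj hΦ.continuousOn_inv)
    (hΦ.isPosSemidefFamily_transpose_conj hQ) ((hD.conj hC).conj hΦ.continuousOn_inv) hnd
    ((hΦ.posDef_conj_inv_iff h0).2 hSig0) ((hΦ.posDef_conj_inv_iff h1).2 hSig1)
  have hPframe : EqOn (fun t => (Φ t)ᵀ * ((W t)ᵀ * P t * W t) * Φ t) P (Icc 0 1) := fun t ht => by
    simpa only [transpose_transpose] using hΦ.adjoint.inv_conj_mul ht (P t)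
  have hSframe : EqOn (fun t => W t * (Φ t * S t * (Φ t)ᵀ) * (W t)ᵀ) S (Icc 0 1) :=
    fun t ht => hΦ.inv_conj_mul ht (S t)
  refine ⟨fun t => (W t)ᵀ * P t * W t, fun t => Φ t * S t * (Φ t)ᵀ, hΦ.isCoupledSol_iff.2
    ⟨hP.congr hPframe, hS.congr (fun t ht => ?_) hSframe, ?_, ?_⟩⟩
  · exact congrArg (fun X => -(_ * X)) (hPframe ht)
  · rw [hS0, hΦ.mul_conj_mul h0]
  · rw [hS1, hΦ.mul_conj_mul h1]

lemma eqOn_of_isCoupledSol (hΦ : IsFundamentalPair 0 1 A Φ W)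
    (hnd : TerminallyNondegenerate 0 1 fun t => W t * (B t * (B t)ᵀ) * (W t)ᵀ)
    (hB : ContinuousOn B (Icc 0 1)) (hC : ContinuousOn C (Icc 0 1))
    (hD : IsPosSemidefFamily D (Icc 0 1)) (hSig0 : Sig0.PosDef)
    (h₁ : IsCoupledSol A Q B C D Sig0 Sig1 P₁ S₁) (h₂ : IsCoupledSol A Q B C D Sig0 Sig1 P₂ S₂) :
    EqOn P₁ P₂ (Icc 0 1) ∧ EqOn S₁ S₂ (Icc 0 1) := by
  have h0 : (0 : ℝ) ∈ Icc 0 1 := unitInterval.zero_mem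
  have hM := (isPosSemidefFamily_mul_transpose hB).conj hΦ.continuousOn_inv
  obtain ⟨hP₁, hS₁, hS₁0, hS₁1⟩ := hΦ.isCoupledSol_iff.1 h₁
  obtain ⟨hP₂, hS₂, hS₂0, hS₂1⟩ := hΦ.isCoupledSol_iff.1 h₂
  have hPframe := hP₁.eqOn_of_isLyapunov one_pos hM ((hD.conj hC).conj hΦ.continuousOn_inv) hnd
    hP₂ hS₁ hS₂ ((hΦ.posDef_conj_inv_iff h0).2 (hS₁0 ▸ hSig0)) (by rw [hS₁0, hS₂0])
    (by rw [hS₁1, hS₂1])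
  have hSframe := hS₁.eqOn (hM.continuousOn.mul hP₁.continuousOn).neg
    (hS₂.congr (fun t ht => congrArg (fun X => -(_ * X)) (hPframe ht)) fun _ _ => rfl) h0
    (by rw [hS₁0, hS₂0])
  refine ⟨fun t ht => ?_, fun t ht => ?_⟩
  · have hcancel := hΦ.adjoint.mul_conj_mul ht
    simp only [transpose_transpose] at hcancel
    rw [← hcancel (P₁ t), ← hcancel (P₂ t)]
    exact congrArg (fun X => (W t)ᵀ * X * W t) (hPframe ht)
  · rw [← hΦ.mul_conj_mul ht (S₁ t), ← hΦ.mul_conj_mul ht (S₂ t)]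
    exact congrArg (fun X => Φ t * X * (Φ t)ᵀ) (hSframe ht)

end IsFundamentalPair

end CoupledSystem

open scoped Topology in
theorem stmt_14_general {n p q : ℕ} {A Q : ℝ → Matrix (Fin n) (Fin n) ℝ}
    {B : ℝ → Matrix (Fin n) (Fin p) ℝ} {C : ℝ → Matrix (Fin n) (Fin q) ℝ}
    {D : ℝ → Matrix (Fin q) (Fin q) ℝ} (hA : ContinuousOn A (Set.Icc 0 1))
    (hB : ContinuousOn B (Set.Icc 0 1)) (hC : ContinuousOn C (Set.Icc 0 1))
    (hQ : IsPosSemidefFamily Q (Set.Icc 0 1)) (hD : IsPosSemidefFamily D (Set.Icc 0 1))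
    {Γ : ℕ → ℝ → Matrix (Fin n) (Fin p) ℝ} (hΓ : IsCtrbMatSeq A B Γ)
    (hrank : ∃ᶠ t in 𝓝[<] (1 : ℝ), (ctrbMat Γ t).rank = n)
    {Sig0 Sig1 : Matrix (Fin n) (Fin n) ℝ} (hSig0 : Sig0.PosDef) (hSig1 : Sig1.PosDef) :
    (∃ P S : ℝ → Matrix (Fin n) (Fin n) ℝ, IsCoupledSol A Q B C D Sig0 Sig1 P S) ∧
    ∀ P₁ S₁ P₂ S₂ : ℝ → Matrix (Fin n) (Fin n) ℝ,
      IsCoupledSol A Q B C D Sig0 Sig1 P₁ S₁ → IsCoupledSol A Q B C D Sig0 Sig1 P₂ S₂ →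
      P₁ 0 = P₂ 0 ∧ ∀ t ∈ Set.Icc (0:ℝ) 1, P₁ t = P₂ t ∧ S₁ t = S₂ t := by
  obtain ⟨Φ, W, hΦ⟩ := exists_isFundamentalPair zero_le_one hA
  have hnd := hΦ.terminallyNondegenerate hΓ hrank
  refine ⟨hΦ.exists_isCoupledSol hnd hB hC hQ hD hSig0 hSig1, fun P₁ S₁ P₂ S₂ h₁ h₂ => ?_⟩
  obtain ⟨hP, hS⟩ := hΦ.eqOn_of_isCoupledSol hnd hB hC hD hSig0 h₁ h₂
  exact ⟨hP unitInterval.zero_mem, fun t ht => ⟨hP ht, hS ht⟩⟩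

theorem stmt_14 {n p q : ℕ} (hn : 1 ≤ n) (hp : 1 ≤ p) (hq : 1 ≤ q)
    (A Q : ℝ → Matrix (Fin n) (Fin n) ℝ) (B : ℝ → Matrix (Fin n) (Fin p) ℝ)
    (C : ℝ → Matrix (Fin n) (Fin q) ℝ) (D : ℝ → Matrix (Fin q) (Fin q) ℝ)
    (hA : Continuous A) (hB : Continuous B) (hQ : Continuous Q)
    (hC : Continuous C) (hD : Continuous D)
    (hQpsd : ∀ t, (Q t).PosSemidef) (hDpsd : ∀ t, (D t).PosSemidef)
    (hAsm : ∀ i j, ContDiff ℝ (n - 1 : ℕ) fun t => A t i j)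
    (hBsm : ∀ i j, ContDiff ℝ (n : ℕ) fun t => B t i j)
    (Γ : ℕ → ℝ → Matrix (Fin n) (Fin p) ℝ)
    (hΓ : IsCtrbMatSeq A B Γ)
    (hTC : TotallyControllable Γ)
    (Sig0 Sig1 : Matrix (Fin n) (Fin n) ℝ) (hSig0 : Sig0.PosDef) (hSig1 : Sig1.PosDef) :
    (∃ P S : ℝ → Matrix (Fin n) (Fin n) ℝ, IsCoupledSol A Q B C D Sig0 Sig1 P S) ∧
    ∀ P₁ S₁ P₂ S₂ : ℝ → Matrix (Fin n) (Fin n) ℝ,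
      IsCoupledSol A Q B C D Sig0 Sig1 P₁ S₁ → IsCoupledSol A Q B C D Sig0 Sig1 P₂ S₂ →
      P₁ 0 = P₂ 0 ∧ ∀ t ∈ Set.Icc (0:ℝ) 1, P₁ t = P₂ t ∧ S₁ t = S₂ t := by
  exact stmt_14_general hA.continuousOn hB.continuousOn hC.continuousOn
    ⟨hQ.continuousOn, fun t _ => hQpsd t⟩ ⟨hD.continuousOn, fun t _ => hDpsd t⟩ hΓ
    hTC.frequently_rank_eq hSig0 hSig1
end

section
/- Let G and H be integers with G ≥ H ≥ 0, let γ, α₀, …, α_H, β₀, …, β_H be real numbers, let f : [0,1] → ℝ be of class C^G with f(t) > 0 on [0,1], and let ρ : [0,1] → ℝ be continuous with ρ(0) < 0 and ρ(1) < γ. Then there exists u : [0,1] → ℝ of class C^G such that ∫₀¹ f(τ)u(τ) dτ = γ, ∫₀ᵗ f(τ)u(τ) dτ > ρ(t) for all t ∈ [0,1], and the i-th derivative of u satisfies u^{(i)}(0) = α_i and u^{(i)}(1) = β_i for all i ∈ {0, 1, …, H}. -/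
/-!
Only the primitive `X t = ∫ τ in a..t, f τ * u τ` matters: the germs of `u` at the endpoints, the
total integral `γ` and the lower bound `ρ` say that `X` has a prescribed germ `P` at `a` with
`P a = 0`, a prescribed germ `Q` at `b` with `Q b = γ`, and that `ρ < X`. Near `a` the function `P`
is above `ρ`, near `b` the function `Q` is, and a large constant is above `ρ` everywhere. As
`{x | ρ t < x}` is convex for each `t`, these three can be glued with bump functions into one `X`
above `ρ`, and `u = X' / f`.
-/

open Set Filter Topology
open scoped ContDiff

section Gluing

variable {E F : Type*} [NormedAddCommGroup E] [NormedSpace ℝ E] [HasContDiffBump E]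
  [NormedAddCommGroup F] [NormedSpace ℝ F] {n : ℕ∞} {s : Set E} {K : E → Set F} {X P Q : E → F}

lemma exists_contDiffOn_mem_convex_eventuallyEq_eqOn_compl {c : E} {N : Set E} (hN : N ∈ 𝓝 c)
    (hK : ∀ x ∈ s, Convex ℝ (K x)) (hX : ContDiffOn ℝ n X s) (hXK : ∀ x ∈ s, X x ∈ K x)
    (hP : ContDiffOn ℝ n P s) (hPK : ∀ᶠ x in 𝓝[s] c, P x ∈ K x) :
    ∃ Y : E → F, ContDiffOn ℝ n Y s ∧ (∀ x ∈ s, Y x ∈ K x) ∧ Y =ᶠ[𝓝 c] P ∧ EqOn Y X Nᶜ := by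
  obtain ⟨ε, hε, hball⟩ :=
    Metric.mem_nhds_iff.1 (inter_mem hN (eventually_nhdsWithin_iff.1 hPK))
  let χ : ContDiffBump c := ⟨ε / 2, ε, half_pos hε, half_lt_self hε⟩
  have hχ_zero : ∀ x ∉ Metric.ball c ε, χ x = 0 := fun x hx ↦
    χ.zero_of_le_dist (not_lt.1 hx)
  refine ⟨fun x ↦ AffineMap.lineMap (X x) (P x) (χ x), ?_, fun x hx ↦ ?_, ?_, fun x hx ↦ ?_⟩
  · simp only [AffineMap.lineMap_apply_module']
    exact (χ.contDiff.contDiffOn.smul (hP.sub hX)).add hX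
  · by_cases hxc : x ∈ Metric.ball c ε
    · exact (hK x hx).lineMap_mem (hXK x hx) ((hball hxc).2 hx) ⟨χ.nonneg, χ.le_one⟩
    · simpa only [hχ_zero x hxc, AffineMap.lineMap_apply_zero] using hXK x hx
  · filter_upwards [χ.eventuallyEq_one] with x hx
    simp only [hx, Pi.one_apply, AffineMap.lineMap_apply_one]
  · simp only [hχ_zero x fun hxc ↦ hx (hball hxc).1, AffineMap.lineMap_apply_zero]

lemma exists_contDiffOn_mem_convex_eventuallyEq_pair {c d : E} (hcd : c ≠ d)
    (hK : ∀ x ∈ s, Convex ℝ (K x)) (hX : ContDiffOn ℝ n X s) (hXK : ∀ x ∈ s, X x ∈ K x)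
    (hP : ContDiffOn ℝ n P s) (hPK : ∀ᶠ x in 𝓝[s] c, P x ∈ K x)
    (hQ : ContDiffOn ℝ n Q s) (hQK : ∀ᶠ x in 𝓝[s] d, Q x ∈ K x) :
    ∃ Y : E → F, ContDiffOn ℝ n Y s ∧ (∀ x ∈ s, Y x ∈ K x) ∧ Y =ᶠ[𝓝 c] P ∧ Y =ᶠ[𝓝 d] Q := by
  obtain ⟨U, V, hU, hV, hUV⟩ := t2_separation_nhds hcd
  obtain ⟨Y, hY, hYK, hYP, -⟩ :=
    exists_contDiffOn_mem_convex_eventuallyEq_eqOn_compl univ_mem hK hX hXK hP hPK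
  obtain ⟨Z, hZ, hZK, hZQ, hZY⟩ :=
    exists_contDiffOn_mem_convex_eventuallyEq_eqOn_compl hV hK hY hYK hQ hQK
  have hZY' : Z =ᶠ[𝓝 c] Y := mem_of_superset hU fun x hx ↦ hZY (hUV.notMem_of_mem_left hx)
  exact ⟨Z, hZ, hZK, hZY'.trans hYP, hZQ⟩

end Gluing

section Primitive

variable {E : Type*} [NormedAddCommGroup E] [NormedSpace ℝ E] [CompleteSpace E]
  {a b c t : ℝ} {g : ℝ → E}

lemma hasDerivWithinAt_integral_of_continuousOn_Icc (hg : ContinuousOn g (Icc a b))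
    (hc : c ∈ Icc a b) (ht : t ∈ Icc a b) :
    HasDerivWithinAt (fun x ↦ ∫ τ in c..x, g τ) (g t) (Icc a b) t := by
  have : Fact (t ∈ Icc a b) := ⟨ht⟩
  exact intervalIntegral.integral_hasDerivWithinAt_right
    (hg.mono (uIcc_subset_Icc hc ht)).intervalIntegrable
    (hg.stronglyMeasurableAtFilter_nhdsWithin measurableSet_Icc t) (hg t ht)

lemma contDiffOn_succ_integral_of_contDiffOn_Icc {n : ℕ∞} (hab : a < b)
    (hg : ContDiffOn ℝ n g (Icc a b)) (hc : c ∈ Icc a b) :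
    ContDiffOn ℝ (n + 1) (fun x ↦ ∫ τ in c..x, g τ) (Icc a b) := by
  have hderiv := fun t (ht : t ∈ Icc a b) ↦
    hasDerivWithinAt_integral_of_continuousOn_Icc hg.continuousOn hc ht
  refine (contDiffOn_succ_iff_derivWithin (uniqueDiffOn_Icc hab)).2
    ⟨fun t ht ↦ (hderiv t ht).differentiableWithinAt, by simp, hg.congr fun t ht ↦ ?_⟩
  exact (hderiv t ht).derivWithin (uniqueDiffOn_Icc hab t ht)

lemma integral_derivWithin_Icc_eq_sub {X : ℝ → E} (hX : ContDiffOn ℝ 1 X (Icc a b))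
    (ht : t ∈ Icc a b) : ∫ τ in a..t, derivWithin X (Icc a b) τ = X t - X a := by
  have hsub : Icc a t ⊆ Icc a b := Icc_subset_Icc_right ht.2
  rcases ht.1.eq_or_lt with rfl | hat
  · simp
  rw [← intervalIntegral.integral_derivWithin_Icc_of_contDiffOn_Icc (hX.mono hsub) ht.1]
  refine intervalIntegral.integral_congr fun τ hτ ↦ ?_
  rw [uIcc_of_le ht.1] at hτ
  exact (derivWithin_subset hsub (uniqueDiffOn_Icc hat τ hτ)
    (hX.differentiableOn one_ne_zero τ (hsub hτ))).symm

end Primitive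

section PrescribedGerms

variable {a b γ : ℝ} {n : ℕ∞} {ρ : ℝ → ℝ}

lemma exists_contDiffOn_eventuallyEq_lt_integral (hab : a < b) {g h : ℝ → ℝ}
    (hg : ContDiffOn ℝ n g (Icc a b)) (hh : ContDiffOn ℝ n h (Icc a b))
    (hρ : ContinuousOn ρ (Icc a b)) (hρa : ρ a < 0) (hρb : ρ b < γ) :
    ∃ v : ℝ → ℝ, ContDiffOn ℝ n v (Icc a b) ∧ v =ᶠ[𝓝[Icc a b] a] g ∧ v =ᶠ[𝓝[Icc a b] b] h ∧
      ∫ τ in a..b, v τ = γ ∧ ∀ t ∈ Icc a b, ρ t < ∫ τ in a..t, v τ := by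
  have ha : a ∈ Icc a b := left_mem_Icc.2 hab.le
  have hb : b ∈ Icc a b := right_mem_Icc.2 hab.le
  let P : ℝ → ℝ := fun t ↦ ∫ τ in a..t, g τ
  let Q : ℝ → ℝ := fun t ↦ γ + ∫ τ in b..t, h τ
  have hP : ContDiffOn ℝ (n + 1) P (Icc a b) :=
    contDiffOn_succ_integral_of_contDiffOn_Icc hab hg ha
  have hQ : ContDiffOn ℝ (n + 1) Q (Icc a b) :=
    contDiffOn_const.add (contDiffOn_succ_integral_of_contDiffOn_Icc hab hh hb)
  have hPa : P a = 0 := intervalIntegral.integral_same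
  have hQb : Q b = γ := by simp [Q]
  have hρP : ∀ᶠ t in 𝓝[Icc a b] a, ρ t < P t :=
    (hρ a ha).eventually_lt (hP.continuousOn a ha) (hPa ▸ hρa)
  have hρQ : ∀ᶠ t in 𝓝[Icc a b] b, ρ t < Q t :=
    (hρ b hb).eventually_lt (hQ.continuousOn b hb) (hQb ▸ hρb)
  obtain ⟨M, hM⟩ := isCompact_Icc.bddAbove_image hρ
  obtain ⟨X, hX, hρX, hXP, hXQ⟩ := exists_contDiffOn_mem_convex_eventuallyEq_pair
    (n := n + 1) hab.ne (fun t _ ↦ convex_Ioi (ρ t)) (contDiffOn_const (c := M + 1))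
    (fun t ht ↦ (hM (mem_image_of_mem ρ ht)).trans_lt (lt_add_one M)) hP hρP hQ hρQ
  have hint : ∀ t ∈ Icc a b, ∫ τ in a..t, derivWithin X (Icc a b) τ = X t := fun t ht ↦ by
    rw [integral_derivWithin_Icc_eq_sub (hX.of_le (by exact_mod_cast le_add_self)) ht,
      hXP.self_of_nhds, hPa, sub_zero]
  refine ⟨derivWithin X (Icc a b), hX.derivWithin (uniqueDiffOn_Icc hab) le_rfl, ?_, ?_, ?_,
    fun t ht ↦ (hρX t ht).trans_eq (hint t ht).symm⟩
  · filter_upwards [(hXP.filter_mono nhdsWithin_le_nhds).derivWithin, self_mem_nhdsWithin]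
      with t hXPt ht
    rw [hXPt]
    exact (hasDerivWithinAt_integral_of_continuousOn_Icc hg.continuousOn ha ht).derivWithin
      (uniqueDiffOn_Icc hab t ht)
  · filter_upwards [(hXQ.filter_mono nhdsWithin_le_nhds).derivWithin, self_mem_nhdsWithin]
      with t hXQt ht
    rw [hXQt]
    exact (HasDerivWithinAt.const_add γ
      (hasDerivWithinAt_integral_of_continuousOn_Icc hh.continuousOn hb ht)).derivWithin
      (uniqueDiffOn_Icc hab t ht)
  · rw [hint b hb, hXQ.self_of_nhds, hQb]

lemma exists_contDiffOn_eventuallyEq_lt_integral_mul (hab : a < b) {f p q : ℝ → ℝ}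
    (hf : ContDiffOn ℝ n f (Icc a b)) (hf0 : ∀ t ∈ Icc a b, f t ≠ 0)
    (hp : ContDiffOn ℝ n p (Icc a b)) (hq : ContDiffOn ℝ n q (Icc a b))
    (hρ : ContinuousOn ρ (Icc a b)) (hρa : ρ a < 0) (hρb : ρ b < γ) :
    ∃ u : ℝ → ℝ, ContDiffOn ℝ n u (Icc a b) ∧ u =ᶠ[𝓝[Icc a b] a] p ∧ u =ᶠ[𝓝[Icc a b] b] q ∧
      ∫ τ in a..b, f τ * u τ = γ ∧ ∀ t ∈ Icc a b, ρ t < ∫ τ in a..t, f τ * u τ := by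
  obtain ⟨v, hv, hva, hvb, hvγ, hρv⟩ :=
    exists_contDiffOn_eventuallyEq_lt_integral hab (hf.mul hp) (hf.mul hq) hρ hρa hρb
  have hint : ∀ t ∈ Icc a b, ∫ τ in a..t, f τ * (v τ / f τ) = ∫ τ in a..t, v τ := fun t ht ↦
    intervalIntegral.integral_congr fun τ hτ ↦
      mul_div_cancel₀ (v τ) (hf0 τ (uIcc_subset_Icc (left_mem_Icc.2 hab.le) ht hτ))
  refine ⟨fun t ↦ v t / f t, hv.div hf hf0, ?_, ?_,
    (hint b (right_mem_Icc.2 hab.le)).trans hvγ, fun t ht ↦ (hρv t ht).trans_eq (hint t ht).symm⟩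
  · filter_upwards [hva, self_mem_nhdsWithin] with t hvt ht
    rw [hvt, mul_div_cancel_left₀ _ (hf0 t ht)]
  · filter_upwards [hvb, self_mem_nhdsWithin] with t hvt ht
    rw [hvt, mul_div_cancel_left₀ _ (hf0 t ht)]

end PrescribedGerms

lemma exists_contDiff_iteratedDeriv_eq {𝕜 : Type*} [NontriviallyNormedField 𝕜] [CharZero 𝕜]
    (H : ℕ) (α : ℕ → 𝕜) (a : 𝕜) :
    ∃ p : 𝕜 → 𝕜, ContDiff 𝕜 ω p ∧ ∀ i ≤ H, iteratedDeriv i p a = α i := by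
  refine ⟨fun t ↦ ∑ j ∈ Finset.range (H + 1), α j / j.factorial * (t - a) ^ j, by fun_prop,
    fun i hi ↦ ?_⟩
  have hterm (j : ℕ) : iteratedDeriv i (fun t ↦ α j / j.factorial * (t - a) ^ j) a =
      if i = j then α j else 0 := by
    simp only [iteratedDeriv_const_mul_field,
      iteratedDeriv_comp_sub_const (f := fun t : 𝕜 ↦ t ^ j), sub_self, iteratedDeriv_fun_pow_zero]
    split_ifs
    · exact div_mul_cancel₀ _ (Nat.cast_ne_zero.2 j.factorial_ne_zero)
    · rw [Nat.cast_zero, mul_zero]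
  rw [iteratedDeriv_fun_sum fun j _ ↦ by fun_prop]
  simp only [hterm, Finset.sum_ite_eq, Finset.mem_range, Nat.lt_succ_of_le hi, if_true]

lemma iteratedDerivWithin_eq_iteratedDeriv_of_eventuallyEq {𝕜 F : Type*}
    [NontriviallyNormedField 𝕜] [NormedAddCommGroup F] [NormedSpace 𝕜 F] {s : Set 𝕜} {c : 𝕜}
    {u p : 𝕜 → F} {i : ℕ} (hs : UniqueDiffOn 𝕜 s) (hc : c ∈ s) (hu : u =ᶠ[𝓝[s] c] p)
    (hp : ContDiffAt 𝕜 i p c) : iteratedDerivWithin i u s c = iteratedDeriv i p c := by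
  rw [hu.iteratedDerivWithin_eq (hu.self_of_nhdsWithin hc),
    iteratedDerivWithin_eq_iteratedDeriv hs hp hc]

theorem stmt_15_general {a b : ℝ} (hab : a < b) (n : ℕ∞) (H : ℕ) (γ : ℝ) (α β : ℕ → ℝ)
    (f : ℝ → ℝ) (hf : ContDiffOn ℝ n f (Icc a b)) (hf0 : ∀ t ∈ Icc a b, f t ≠ 0)
    (ρ : ℝ → ℝ) (hρ : ContinuousOn ρ (Icc a b)) (hρa : ρ a < 0) (hρb : ρ b < γ) :
    ∃ u : ℝ → ℝ, ContDiffOn ℝ n u (Icc a b) ∧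
      (∫ τ in a..b, f τ * u τ) = γ ∧
      (∀ t ∈ Icc a b, ρ t < ∫ τ in a..t, f τ * u τ) ∧
      (∀ i ≤ H, iteratedDerivWithin i u (Icc a b) a = α i ∧
        iteratedDerivWithin i u (Icc a b) b = β i) := by
  obtain ⟨p, hp, hpα⟩ := exists_contDiff_iteratedDeriv_eq H α a
  obtain ⟨q, hq, hqβ⟩ := exists_contDiff_iteratedDeriv_eq H β b
  obtain ⟨u, hu, hup, huq, hγ, hρu⟩ := exists_contDiffOn_eventuallyEq_lt_integral_mul hab hf hf0
    (hp.of_le le_top).contDiffOn (hq.of_le le_top).contDiffOn hρ hρa hρb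
  refine ⟨u, hu, hγ, hρu, fun i hi ↦ ⟨?_, ?_⟩⟩
  · rw [← hpα i hi]
    exact iteratedDerivWithin_eq_iteratedDeriv_of_eventuallyEq (uniqueDiffOn_Icc hab)
      (left_mem_Icc.2 hab.le) hup (hp.of_le le_top).contDiffAt
  · rw [← hqβ i hi]
    exact iteratedDerivWithin_eq_iteratedDeriv_of_eventuallyEq (uniqueDiffOn_Icc hab)
      (right_mem_Icc.2 hab.le) huq (hq.of_le le_top).contDiffAt

theorem stmt_15 (G H : ℕ) (hGH : H ≤ G) (γ : ℝ) (α β : ℕ → ℝ)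
    (f : ℝ → ℝ) (hf : ContDiffOn ℝ G f (Set.Icc 0 1))
    (hfpos : ∀ t ∈ Set.Icc (0:ℝ) 1, 0 < f t)
    (ρ : ℝ → ℝ) (hρ : ContinuousOn ρ (Set.Icc 0 1))
    (hρ0 : ρ 0 < 0) (hρ1 : ρ 1 < γ) :
    ∃ u : ℝ → ℝ, ContDiffOn ℝ G u (Set.Icc 0 1) ∧
      (∫ τ in (0:ℝ)..1, f τ * u τ) = γ ∧
      (∀ t ∈ Set.Icc (0:ℝ) 1, ρ t < ∫ τ in (0:ℝ)..t, f τ * u τ) ∧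
      (∀ i ≤ H, iteratedDerivWithin i u (Set.Icc 0 1) 0 = α i ∧
        iteratedDerivWithin i u (Set.Icc 0 1) 1 = β i) :=
  stmt_15_general zero_lt_one G H γ α β f hf (fun t ht ↦ (hfpos t ht).ne') ρ hρ hρ0 hρ1
end
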